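/- arXiv:2503.06041 — 6 statements merged into one kernel-verified Lean document; each statement's English description precedes it below -/
import Mathlib

section
/- Let μ₁,…,μ_d be Borel probability measures on ℝ whose cumulative distribution functions Φ₁,…,Φ_d are continuous and strictly increasing, with inverse functions Φ_i⁻¹ : (0,1) → ℝ, and let μ = μ₁ ⊗ ⋯ ⊗ μ_d be the product measure on ℝ^d. Then for all x, x′ ∈ ℝ^d, ∫_{[0,1]^d} ∫_{[0,1]} 2·cos(xᵀΦ⁻¹(t) + 2πb)·cos(x′ᵀΦ⁻¹(t) + 2πb) db dt = ∫_{ℝ^d} cos((x − x′)ᵀω) dμ(ω), where Φ⁻¹(t) = (Φ₁⁻¹(t₁),…,Φ_d⁻¹(t_d)). In particular, if μ is symmetric (invariant under ω ↦ −ω), this common value equals ∫_{ℝ^d} e^{−i(x−x′)ᵀω} dμ(ω). -/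
/-!
The identity is inverse transform sampling combined with averaging over a uniform phase.

* Since `Φ (Φinv t) = t` on `(0,1)` and `Φ` is strictly increasing, `Φinv t ≤ a ↔ t ≤ Φ a`, so the
  push-forward of Lebesgue measure on `[0,1]` under `Φinv` has CDF `Φ` and hence is the given
  measure (`map_quantile`). Taking products, `Φ⁻¹` pushes Lebesgue measure on the cube to `μ`.
* `2 cos (A + 2πb) cos (B + 2πb) = cos (A - B) + cos (A + B + 4πb)`, and the last term integrates
  to zero over a period (`integral_phase`).
* For symmetric `μ` the odd function `sin` of a linear form integrates to zero, so the imaginary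
  part of the characteristic function vanishes.
-/

open MeasureTheory

lemma monotoneOn_rightInverse {F G : ℝ → ℝ} {s : Set ℝ} (hF : StrictMono F)
    (hG : ∀ t ∈ s, F (G t) = t) : MonotoneOn G s := by
  intro a ha b hb hab
  rw [← hF.le_iff_le, hG a ha, hG b hb]
  exact hab

/-- The values of `G` at the endpoints `0` and `1` are arbitrary, hence only a.e. measurability. -/
lemma aemeasurable_quantile {F G : ℝ → ℝ} (hF : StrictMono F)
    (hG : ∀ t ∈ Set.Ioo (0 : ℝ) 1, F (G t) = t) :
    AEMeasurable G (volume.restrict (Set.Icc (0 : ℝ) 1)) := by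
  rw [← Measure.restrict_congr_set (Ioo_ae_eq_Icc (μ := volume) (a := (0 : ℝ)) (b := 1))]
  exact aemeasurable_restrict_of_monotoneOn measurableSet_Ioo (monotoneOn_rightInverse hF hG)

/-- Inverse transform sampling: the quantile function pushes the uniform measure on `[0,1]` to the
measure whose CDF it inverts. -/
lemma map_quantile (ν : Measure ℝ) [IsProbabilityMeasure ν] {F G : ℝ → ℝ}
    (hFdef : ∀ x, F x = (ν (Set.Iic x)).toReal) (hF : StrictMono F)
    (hG : ∀ t ∈ Set.Ioo (0 : ℝ) 1, F (G t) = t) :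
    (volume.restrict (Set.Icc (0 : ℝ) 1)).map G = ν := by
  have hm := aemeasurable_quantile hF hG
  have : IsFiniteMeasure ((volume.restrict (Set.Icc (0 : ℝ) 1)).map G) := inferInstance
  refine Measure.ext_of_Iic _ _ fun a => ?_
  rw [Measure.map_apply_of_aemeasurable hm measurableSet_Iic]
  have hIoo : volume.restrict (Set.Icc (0 : ℝ) 1) = volume.restrict (Set.Ioo (0 : ℝ) 1) :=
    (Measure.restrict_congr_set Ioo_ae_eq_Icc).symm
  have h1 : F a ≤ 1 := by
    rw [hFdef]
    exact ENNReal.toReal_le_of_le_ofReal zero_le_one (by simpa using prob_le_one)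
  have h2 : G ⁻¹' Set.Iic a =ᵐ[volume.restrict (Set.Icc (0 : ℝ) 1)] Set.Iic (F a) := by
    rw [hIoo]
    filter_upwards [ae_restrict_mem measurableSet_Ioo] with t ht
    refine propext ?_
    change G t ≤ a ↔ t ≤ F a
    rw [← hF.le_iff_le, hG t ht]
  have h3 : Set.Iic (F a) ∩ Set.Icc 0 1 = Set.Icc 0 (F a) := by
    ext t
    simp only [Set.mem_inter_iff, Set.mem_Iic, Set.mem_Icc]
    constructor
    · rintro ⟨h, h', -⟩
      exact ⟨h', h⟩
    · rintro ⟨h, h'⟩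
      exact ⟨h', h, h'.trans h1⟩
  rw [measure_congr h2, Measure.restrict_apply measurableSet_Iic, h3, Real.volume_Icc, sub_zero,
    hFdef, ENNReal.ofReal_toReal (measure_ne_top _ _)]

lemma integral_phase (A B : ℝ) :
    ∫ b in Set.Icc (0 : ℝ) 1,
      2 * Real.cos (A + 2 * Real.pi * b) * Real.cos (B + 2 * Real.pi * b) = Real.cos (A - B) := by
  rw [integral_Icc_eq_integral_Ioc, ← intervalIntegral.integral_of_le zero_le_one]
  have hpi : 4 * Real.pi ≠ 0 := by positivity
  have h : ∀ b : ℝ, 2 * Real.cos (A + 2 * Real.pi * b) * Real.cos (B + 2 * Real.pi * b)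
      = Real.cos (A - B) + Real.cos (A + B + 4 * Real.pi * b) := by
    intro b
    rw [Real.two_mul_cos_mul_cos]
    congr 2 <;> ring
  have hper : Real.sin (A + B + 4 * Real.pi) = Real.sin (A + B) := by
    rw [← Real.sin_add_two_pi (A + B), ← Real.sin_add_two_pi (A + B + 2 * Real.pi)]
    congr 1
    ring
  simp_rw [h]
  rw [intervalIntegral.integral_add (by simp)
    (Continuous.intervalIntegrable (by fun_prop) _ _),
    intervalIntegral.integral_comp_add_mul (fun y => Real.cos y) hpi]
  simp [hper]

/-- Let `μ₁,…,μ_d` be Borel probability measures on `ℝ` whose CDFs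
`Φ₁,…,Φ_d` are continuous and strictly increasing, with inverse functions
`Φ_i⁻¹ : (0,1) → ℝ`, and let `μ = μ₁ ⊗ ⋯ ⊗ μ_d` be the product measure on `ℝ^d`.
Then for all `x, x′ ∈ ℝ^d`,
`∫_{[0,1]^d} ∫_{[0,1]} 2·cos(xᵀΦ⁻¹(t)+2πb)·cos(x′ᵀΦ⁻¹(t)+2πb) db dt
  = ∫_{ℝ^d} cos((x−x′)ᵀω) dμ(ω)`,
and if moreover `μ` is symmetric (invariant under `ω ↦ −ω`), this common value equals
`∫_{ℝ^d} e^{−i(x−x′)ᵀω} dμ(ω)`. -/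
theorem bochner_random_feature_representation
    (d : ℕ) (μ : Fin d → Measure ℝ) [∀ i, IsProbabilityMeasure (μ i)]
    (Φ : Fin d → ℝ → ℝ)
    (hΦdef : ∀ i x, Φ i x = ((μ i) (Set.Iic x)).toReal)
    (hΦcont : ∀ i, Continuous (Φ i))
    (hΦmono : ∀ i, StrictMono (Φ i))
    (Φinv : Fin d → ℝ → ℝ)
    (hΦinv : ∀ i, ∀ t ∈ Set.Ioo (0 : ℝ) 1, Φ i (Φinv i t) = t)
    (x x' : Fin d → ℝ) :
    (∫ t in Set.univ.pi (fun _ : Fin d => Set.Icc (0 : ℝ) 1),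
        ∫ b in Set.Icc (0 : ℝ) 1,
          2 * Real.cos ((∑ i, x i * Φinv i (t i)) + 2 * Real.pi * b) *
            Real.cos ((∑ i, x' i * Φinv i (t i)) + 2 * Real.pi * b))
      = (∫ ω, Real.cos (∑ i, (x i - x' i) * ω i) ∂(Measure.pi μ))
    ∧ ((Measure.pi μ).map (fun ω => -ω) = Measure.pi μ →
        ((∫ ω, Real.cos (∑ i, (x i - x' i) * ω i) ∂(Measure.pi μ) : ℝ) : ℂ)
          = ∫ ω, Complex.exp (-Complex.I * ((∑ i, (x i - x' i) * ω i : ℝ) : ℂ))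
              ∂(Measure.pi μ)) := by
  constructor
  · have hm : ∀ i, AEMeasurable (Φinv i) (volume.restrict (Set.Icc (0 : ℝ) 1)) :=
      fun i => aemeasurable_quantile (hΦmono i) (hΦinv i)
    have hmap : ∀ i, (volume.restrict (Set.Icc (0 : ℝ) 1)).map (Φinv i) = μ i :=
      fun i => map_quantile (μ i) (hΦdef i) (hΦmono i) (hΦinv i)
    have hpi : (Measure.pi fun _ : Fin d => volume.restrict (Set.Icc (0 : ℝ) 1)).map
        (fun t i => Φinv i (t i)) = Measure.pi μ := by
      have : ∀ i, SigmaFinite ((volume.restrict (Set.Icc (0 : ℝ) 1)).map (Φinv i)) := by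
        intro i
        rw [hmap i]
        infer_instance
      rw [Measure.pi_map_pi hm]
      simp_rw [hmap]
    have hae : AEMeasurable (fun (t : Fin d → ℝ) i => Φinv i (t i))
        (Measure.pi fun _ : Fin d => volume.restrict (Set.Icc (0 : ℝ) 1)) :=
      aemeasurable_pi_lambda _ fun i =>
        (hm i).comp_quasiMeasurePreserving (Measure.quasiMeasurePreserving_eval _ i)
    simp_rw [integral_phase]
    rw [volume_pi, Measure.restrict_pi_pi, ← hpi, integral_map hae
      (Continuous.aestronglyMeasurable (by fun_prop))]
    simp_rw [sub_mul, Finset.sum_sub_distrib]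
  · intro hsymm
    set L : (Fin d → ℝ) → ℝ := fun ω => ∑ i, (x i - x' i) * ω i with hL
    have hLc : Continuous L := by fun_prop
    have hLneg : ∀ ω, L (-ω) = -L ω := fun ω => by simp [hL]
    have hsin : ∫ ω, Real.sin (L ω) ∂(Measure.pi μ) = 0 := by
      have h : ∫ ω, Real.sin (L ω) ∂(Measure.pi μ)
          = -∫ ω, Real.sin (L ω) ∂(Measure.pi μ) := by
        conv_lhs => rw [← hsymm]
        rw [integral_map (by fun_prop)
          (Continuous.aestronglyMeasurable (by fun_prop)), ← integral_neg]
        simp_rw [hLneg, Real.sin_neg]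
      linarith
    have hic : Integrable (fun ω => ((Real.cos (L ω) : ℝ) : ℂ)) (Measure.pi μ) :=
      (Integrable.of_bound (f := fun ω => Real.cos (L ω))
        (Continuous.aestronglyMeasurable (by fun_prop)) 1
        (ae_of_all _ fun ω => Real.abs_cos_le_one _)).ofReal
    have his : Integrable (fun ω => ((Real.sin (L ω) : ℝ) : ℂ)) (Measure.pi μ) :=
      (Integrable.of_bound (f := fun ω => Real.sin (L ω))
        (Continuous.aestronglyMeasurable (by fun_prop)) 1
        (ae_of_all _ fun ω => Real.abs_sin_le_one _)).ofReal
    have hexp : ∀ ω, Complex.exp (-Complex.I * ((L ω : ℝ) : ℂ))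
        = ((Real.cos (L ω) : ℝ) : ℂ) - ((Real.sin (L ω) : ℝ) : ℂ) * Complex.I := by
      intro ω
      rw [show -Complex.I * ((L ω : ℝ) : ℂ) = (-(L ω : ℂ)) * Complex.I by ring,
        Complex.exp_mul_I, Complex.cos_neg, Complex.sin_neg, Complex.ofReal_cos,
        Complex.ofReal_sin]
      ring
    change ((∫ ω, Real.cos (L ω) ∂(Measure.pi μ) : ℝ) : ℂ)
      = ∫ ω, Complex.exp (-Complex.I * ((L ω : ℝ) : ℂ)) ∂(Measure.pi μ)
    simp_rw [hexp]
    rw [integral_sub hic (his.mul_const _), integral_mul_const, integral_complex_ofReal,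
      integral_complex_ofReal, hsin]
    simp
end

section
/- Let 𝒳 ⊆ ℝ^d be a compact set, and for i = 1,…,d let C_i > 0 and let Φ_i⁻¹ : (0,1) → ℝ be differentiable with 0 ≤ (Φ_i⁻¹)′(t) ≤ C_i / min(t, 1−t) for all t ∈ (0,1). For fixed x, x′ ∈ 𝒳 define f : (0,1)^d × (0,1) → ℝ by f(t,b) = 2·cos(xᵀΦ⁻¹(t) + 2πb)·cos(x′ᵀΦ⁻¹(t) + 2πb), where Φ⁻¹(t) = (Φ₁⁻¹(t₁),…,Φ_d⁻¹(t_d)). Then for every nonempty subset u ⊆ {1,…,d+1} (coordinate d+1 referring to the variable b) and every (t,b) ∈ (0,1)^{d+1}, the mixed first-order partial derivative ∂^u f (one derivative in each coordinate in u) exists and satisfies |∂^u f(t,b)| ≤ 4π · D^{|u∖{d+1}|} · Π_{i ∈ u∖{d+1}} C_i / min(t_i, 1−t_i), where D = max over x, y ∈ 𝒳 and i ∈ {1,…,d} of max(|x_i − y_i|, |x_i + y_i|). -/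
/-!
By the product-to-sum formula the integrand is a sum of two cosines of separable phases,
`cos (∑ j, a j * ψ j (ω j)) + cos (∑ j, b j * ψ j (ω j))`, where `ψ` is `Φ⁻¹` in the first `d`
coordinates and the identity in the last one; the phases have coefficients `x - x'` and `x + x'`
in the first `d` coordinates, and `0` and `4π` in the last one. Differentiating once in each of
`k` distinct coordinates turns `cos (∑ j, a j * ψ j (ω j))` into
`(∏ j, a j * ψ' j (ω j)) * cos (∑ j, a j * ψ j (ω j) + k * π / 2)`, with the product over these
coordinates (`iterPDeriv_cos_add_cos`). In the first `d` coordinates `|a j|, |b j| ≤ D`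
and `0 ≤ ψ' j t ≤ C j / min t (1 - t)`, which bounds each factor. If the
last coordinate is not differentiated, both terms contribute and `2 ≤ 4π`; if it is, the first
term vanishes and the second carries the factor `4π`.
-/

open MeasureTheory

/-- Partial derivative of `g : ℝ^n → ℝ` in coordinate `j`. -/
noncomputable def pderivCoord {n : ℕ} (j : Fin n) (g : (Fin n → ℝ) → ℝ) :
    (Fin n → ℝ) → ℝ :=
  fun ω => deriv (fun s => g (Function.update ω j s)) (ω j)

/-- Iterated mixed first-order partial derivative of `g` in the coordinates listed in `L`. -/
noncomputable def iterPDeriv {n : ℕ} : List (Fin n) → ((Fin n → ℝ) → ℝ) → (Fin n → ℝ) → ℝ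
  | [], g => g
  | j :: rest, g => pderivCoord j (iterPDeriv rest g)

/-- Existence of the iterated mixed partial derivative of `g` on the set `S`: at each
stage, the relevant one-dimensional derivative exists at every point of `S`. -/
def IterDiffOn {n : ℕ} (S : Set (Fin n → ℝ)) : List (Fin n) → ((Fin n → ℝ) → ℝ) → Prop
  | [], _ => True
  | j :: rest, g => IterDiffOn S rest g ∧
      ∀ ω ∈ S, DifferentiableAt ℝ
        (fun s => iterPDeriv rest g (Function.update ω j s)) (ω j)

/-- The random-feature integrand
`f(t,b) = 2 cos(xᵀΦ⁻¹(t)+2πb) cos(x′ᵀΦ⁻¹(t)+2πb)` on `[0,1]^{d+1}`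
(coordinate `d+1` is the variable `b`). -/
noncomputable def featFun (d : ℕ) (Φinv : Fin d → ℝ → ℝ) (x x' : Fin d → ℝ)
    (ω : Fin (d + 1) → ℝ) : ℝ :=
  2 * Real.cos ((∑ j, x j * Φinv j (ω j.castSucc)) + 2 * Real.pi * ω (Fin.last d)) *
    Real.cos ((∑ j, x' j * Φinv j (ω j.castSucc)) + 2 * Real.pi * ω (Fin.last d))

/-- The derivative in coordinate `j` of a cosine with separable phase. The shift by `c + π / 2`
on the right-hand side absorbs the sign and the sine. -/
lemma hasDerivAt_cos_phase {n : ℕ} (ψ : Fin n → ℝ → ℝ) (a : Fin n → ℝ) (c p : ℝ)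
    (j : Fin n) (ω : Fin n → ℝ) (h : HasDerivAt (ψ j) p (ω j)) :
    HasDerivAt (fun s => Real.cos ((∑ i, a i * ψ i (Function.update ω j s i)) + c))
      (a j * p * Real.cos ((∑ i, a i * ψ i (ω i)) + (c + Real.pi / 2))) (ω j) := by
  have hsum : HasDerivAt (fun s => (∑ i, a i * ψ i (Function.update ω j s i)) + c)
      (a j * p) (ω j) := by
    have h1 : HasDerivAt (fun s => ∑ i, a i * ψ i (Function.update ω j s i))
        (∑ i, if i = j then a j * p else 0) (ω j) := by
      refine HasDerivAt.fun_sum fun i _ => ?_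
      by_cases hij : i = j
      · subst hij
        simpa using h.const_mul (a i)
      · simpa [hij] using hasDerivAt_const (ω j) (a i * ψ i (ω i))
    simpa using h1.add_const c
  have h2 := hsum.cos
  rw [Function.update_eq_self] at h2
  convert h2 using 1
  rw [← add_assoc, Real.cos_add_pi_div_two]
  ring

/-- Closed form of the mixed partial derivatives of a sum of two cosines with separable phases. -/
lemma iterPDeriv_cos_add_cos {n : ℕ} (ψ ψ' : Fin n → ℝ → ℝ)
    (hψ : ∀ i, ∀ t ∈ Set.Ioo (0 : ℝ) 1, HasDerivAt (ψ i) (ψ' i t) t)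
    (a b : Fin n → ℝ) (f : (Fin n → ℝ) → ℝ)
    (hf : ∀ ω, f ω = Real.cos (∑ i, a i * ψ i (ω i)) + Real.cos (∑ i, b i * ψ i (ω i)))
    (L : List (Fin n)) (hL : L.Nodup) :
    IterDiffOn (Set.univ.pi fun _ : Fin n => Set.Ioo (0 : ℝ) 1) L f ∧
    ∀ ω ∈ Set.univ.pi fun _ : Fin n => Set.Ioo (0 : ℝ) 1,
      iterPDeriv L f ω =
        (L.map fun i => a i * ψ' i (ω i)).prod *
            Real.cos ((∑ i, a i * ψ i (ω i)) + L.length * (Real.pi / 2)) +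
        (L.map fun i => b i * ψ' i (ω i)).prod *
            Real.cos ((∑ i, b i * ψ i (ω i)) + L.length * (Real.pi / 2)) := by
  induction L with
  | nil => exact ⟨trivial, fun ω _ => by simp [iterPDeriv, hf]⟩
  | cons j L ih =>
    rw [List.nodup_cons] at hL
    obtain ⟨hjL, hL⟩ := hL
    obtain ⟨ihd, ihe⟩ := ih hL
    have key : ∀ ω ∈ Set.univ.pi fun _ : Fin n => Set.Ioo (0 : ℝ) 1,
        HasDerivAt (fun s => iterPDeriv L f (Function.update ω j s))
          (((j :: L).map fun i => a i * ψ' i (ω i)).prod *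
            Real.cos ((∑ i, a i * ψ i (ω i)) + (j :: L).length * (Real.pi / 2)) +
          ((j :: L).map fun i => b i * ψ' i (ω i)).prod *
            Real.cos ((∑ i, b i * ψ i (ω i)) + (j :: L).length * (Real.pi / 2))) (ω j) := by
      intro ω hω
      have hωj := hω j (Set.mem_univ j)
      -- `j ∉ L`, so the coefficient products do not depend on the coordinate `j`.
      have hmap : ∀ (e : Fin n → ℝ) (s : ℝ),
          (L.map fun i => e i * ψ' i (Function.update ω j s i)) =
            L.map fun i => e i * ψ' i (ω i) := by
        intro e s
        refine List.map_congr_left fun i hi => ?_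
        have hij : i ≠ j := fun h => hjL (h ▸ hi)
        rw [Function.update_of_ne hij]
      have hA := (hasDerivAt_cos_phase ψ a (L.length * (Real.pi / 2)) _ j ω
        (hψ j _ hωj)).const_mul (L.map fun i => a i * ψ' i (ω i)).prod
      have hB := (hasDerivAt_cos_phase ψ b (L.length * (Real.pi / 2)) _ j ω
        (hψ j _ hωj)).const_mul (L.map fun i => b i * ψ' i (ω i)).prod
      have hAB := hA.add hB
      have hlen : (((j :: L).length : ℕ) : ℝ) * (Real.pi / 2)
          = L.length * (Real.pi / 2) + Real.pi / 2 := by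
        push_cast [List.length_cons]
        ring
      rw [hlen, List.map_cons, List.map_cons, List.prod_cons, List.prod_cons]
      refine (hAB.congr_of_eventuallyEq ?_).congr_deriv (by ring)
      filter_upwards [isOpen_Ioo.mem_nhds hωj] with s hs
      have hmem : Function.update ω j s ∈
          Set.univ.pi fun _ : Fin n => Set.Ioo (0 : ℝ) 1 := by
        intro i _
        by_cases hij : i = j
        · subst hij
          simpa using hs
        · simpa [hij] using hω i (Set.mem_univ i)
      rw [ihe _ hmem, hmap, hmap]
      rfl
    exact ⟨⟨ihd, fun ω hω => (key ω hω).differentiableAt⟩, fun ω hω => (key ω hω).deriv⟩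

lemma prod_finset_castSucc {d : ℕ} (u : Finset (Fin (d + 1))) (g : Fin (d + 1) → ℝ) :
    ∏ i ∈ u, g i = (∏ j ∈ Finset.univ.filter (fun j : Fin d => j.castSucc ∈ u), g j.castSucc) *
      if Fin.last d ∈ u then g (Fin.last d) else 1 := by
  rw [Finset.prod_filter, ← Fin.prod_univ_castSucc (fun i => if i ∈ u then g i else 1)]
  simp

lemma card_filter_ne_last {d : ℕ} (u : Finset (Fin (d + 1))) :
    (u.filter (· ≠ Fin.last d)).card =
      (Finset.univ.filter (fun j : Fin d => j.castSucc ∈ u)).card := by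
  symm
  refine Finset.card_bij (fun j _ => j.castSucc) ?_ ?_ ?_
  · intro j hj
    simpa [Fin.castSucc_ne_last] using hj
  · intro i _ j _ h
    exact Fin.castSucc_injective _ h
  · intro i hi
    rw [Finset.mem_filter] at hi
    exact ⟨i.castPred hi.2, by simpa using hi.1, by simp⟩

/-- Compactness makes the set defining `D` bounded above, so its `sSup` is an upper bound. -/
lemma max_abs_le_sSup {d : ℕ} {K : Set (Fin d → ℝ)} (hK : IsCompact K)
    {x x' : Fin d → ℝ} (hx : x ∈ K) (hx' : x' ∈ K) (i : Fin d) :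
    max |x i - x' i| |x i + x' i| ≤ sSup {r : ℝ | ∃ y ∈ K, ∃ z ∈ K, ∃ i : Fin d,
      r = max |y i - z i| |y i + z i|} := by
  obtain ⟨R, hR⟩ := hK.isBounded.exists_norm_le
  refine le_csSup ⟨R + R, ?_⟩ ⟨x, hx, x', hx', i, rfl⟩
  rintro r ⟨y, hy, z, hz, j, rfl⟩
  have h1 : |y j| ≤ R := (norm_le_pi_norm y j).trans (hR y hy)
  have h2 : |z j| ≤ R := (norm_le_pi_norm z j).trans (hR z hz)
  exact max_le ((abs_sub _ _).trans (add_le_add h1 h2))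
    ((abs_add_le _ _).trans (add_le_add h1 h2))

/-- Under Condition 1, for fixed `x, x′ ∈ 𝒳` the random-feature
integrand `f(t,b) = 2 cos(xᵀΦ⁻¹(t)+2πb) cos(x′ᵀΦ⁻¹(t)+2πb)` has, for every nonempty
`u ⊆ {1,…,d+1}`, a mixed first-order partial derivative `∂^u f` on `(0,1)^{d+1}`, and
`|∂^u f(t,b)| ≤ 4π D^{|u∖{d+1}|} Π_{i∈u∖{d+1}} C_i / min(t_i, 1−t_i)`, where
`D = max_{x,y∈𝒳, i} max(|x_i−y_i|, |x_i+y_i|)`. -/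
theorem boundary_growth_of_condition_one
    (d : ℕ) (Ci : Fin d → ℝ) (hCi : ∀ i, 0 < Ci i)
    (Φinv : Fin d → ℝ → ℝ)
    (Φinv' : Fin d → ℝ → ℝ)
    (hΦderiv : ∀ i, ∀ t ∈ Set.Ioo (0 : ℝ) 1, HasDerivAt (Φinv i) (Φinv' i t) t)
    (hΦbound : ∀ i, ∀ t ∈ Set.Ioo (0 : ℝ) 1,
      0 ≤ Φinv' i t ∧ Φinv' i t ≤ Ci i / min t (1 - t))
    (𝒳 : Set (Fin d → ℝ)) (h𝒳 : IsCompact 𝒳)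
    (x x' : Fin d → ℝ) (hx : x ∈ 𝒳) (hx' : x' ∈ 𝒳)
    (D : ℝ)
    (hD : D = sSup {r : ℝ | ∃ y ∈ 𝒳, ∃ z ∈ 𝒳, ∃ i : Fin d,
      r = max |y i - z i| |y i + z i|}) :
    ∀ u : Finset (Fin (d + 1)), u.Nonempty →
      IterDiffOn (Set.univ.pi fun _ : Fin (d + 1) => Set.Ioo (0 : ℝ) 1)
        (u.sort (· ≤ ·)) (featFun d Φinv x x') ∧
      ∀ ω ∈ Set.univ.pi fun _ : Fin (d + 1) => Set.Ioo (0 : ℝ) 1,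
        |iterPDeriv (u.sort (· ≤ ·)) (featFun d Φinv x x') ω|
          ≤ 4 * Real.pi * D ^ (u.filter (· ≠ Fin.last d)).card *
            ∏ j ∈ Finset.univ.filter (fun j : Fin d => j.castSucc ∈ u),
              Ci j / min (ω j.castSucc) (1 - ω j.castSucc) := by
  subst hD
  set D := sSup {r : ℝ | ∃ y ∈ 𝒳, ∃ z ∈ 𝒳, ∃ i : Fin d,
      r = max |y i - z i| |y i + z i|} with hDdef
  intro u _
  let ψ : Fin (d + 1) → ℝ → ℝ := Fin.snoc (α := fun _ => ℝ → ℝ) Φinv id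
  let ψ' : Fin (d + 1) → ℝ → ℝ := Fin.snoc (α := fun _ => ℝ → ℝ) Φinv' (fun _ => 1)
  let a : Fin (d + 1) → ℝ := Fin.snoc (α := fun _ => ℝ) (fun j => x j - x' j) 0
  let b : Fin (d + 1) → ℝ := Fin.snoc (α := fun _ => ℝ) (fun j => x j + x' j) (4 * Real.pi)
  have hψ : ∀ i, ∀ t ∈ Set.Ioo (0 : ℝ) 1, HasDerivAt (ψ i) (ψ' i t) t := by
    intro i t ht
    induction i using Fin.lastCases with
    | last => simpa [ψ, ψ'] using hasDerivAt_id t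
    | cast i => simpa [ψ, ψ'] using hΦderiv i t ht
  have hf : ∀ ω, featFun d Φinv x x' ω =
      Real.cos (∑ i, a i * ψ i (ω i)) + Real.cos (∑ i, b i * ψ i (ω i)) := by
    intro ω
    rw [featFun, Real.two_mul_cos_mul_cos, Fin.sum_univ_castSucc, Fin.sum_univ_castSucc]
    simp only [a, b, ψ, Fin.snoc_castSucc, Fin.snoc_last, id, sub_mul, add_mul,
      Finset.sum_sub_distrib, Finset.sum_add_distrib]
    congr 2 <;> ring
  obtain ⟨hdiff, hval⟩ := iterPDeriv_cos_add_cos ψ ψ' hψ a b (featFun d Φinv x x') hf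
    (u.sort (· ≤ ·)) (u.sort_nodup (· ≤ ·))
  refine ⟨hdiff, fun ω hω => ?_⟩
  rw [hval ω hω]
  have hlist : ∀ g : Fin (d + 1) → ℝ, ((u.sort (· ≤ ·)).map g).prod = ∏ i ∈ u, g i := by
    intro g
    rw [← List.prod_toFinset g (u.sort_nodup (· ≤ ·)), Finset.sort_toFinset]
  rw [hlist, hlist, prod_finset_castSucc, prod_finset_castSucc, card_filter_ne_last]
  set s := Finset.univ.filter (fun j : Fin d => j.castSucc ∈ u) with hs
  set B := D ^ s.card * ∏ j ∈ s, Ci j / min (ω j.castSucc) (1 - ω j.castSucc) with hB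
  have hbound : ∀ e : Fin d → ℝ, (∀ j, |e j| ≤ D) →
      |∏ j ∈ s, e j * Φinv' j (ω j.castSucc)| ≤ B := by
    intro e he
    rw [Finset.abs_prod, hB, ← Finset.prod_const, ← Finset.prod_mul_distrib]
    refine Finset.prod_le_prod (fun _ _ => abs_nonneg _) fun j _ => ?_
    obtain ⟨h0, h1⟩ := hΦbound j _ (hω j.castSucc (Set.mem_univ _))
    rw [abs_mul, abs_of_nonneg h0]
    exact mul_le_mul (he j) h1 h0 ((abs_nonneg _).trans (he j))
  have hP := hbound (fun j => x j - x' j) fun j =>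
    (le_max_left _ _).trans (max_abs_le_sSup h𝒳 hx hx' j)
  have hQ := hbound (fun j => x j + x' j) fun j =>
    (le_max_right _ _).trans (max_abs_le_sSup h𝒳 hx hx' j)
  have hB0 : 0 ≤ B := (abs_nonneg _).trans hP
  have hpi := Real.pi_gt_three
  rw [mul_assoc (4 * Real.pi), ← hB]
  simp only [a, b, ψ', Fin.snoc_castSucc, Fin.snoc_last]
  have hcos : ∀ p θ : ℝ, |p| ≤ B → |p * Real.cos θ| ≤ B := by
    intro p θ hp
    rw [abs_mul]
    exact (mul_le_of_le_one_right (abs_nonneg p) (Real.abs_cos_le_one θ)).trans hp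
  split_ifs with hlast
  · rw [zero_mul, mul_zero, zero_mul, zero_add, mul_one, mul_comm _ (4 * Real.pi), mul_assoc,
      abs_mul, abs_of_pos (by positivity : 0 < 4 * Real.pi)]
    exact mul_le_mul_of_nonneg_left (hcos _ _ hQ) (by positivity)
  · rw [mul_one, mul_one]
    refine (abs_add_le _ _).trans ((add_le_add (hcos _ _ hP) (hcos _ _ hQ)).trans ?_)
    nlinarith
end

section
/- Let C > 0, let ℓ ≥ 2 be an integer, and let f : (0,1) → ℝ be differentiable with |f′(y)| ≤ C / min(y, 1−y) for all y ∈ (0,1). Then 2^ℓ · Σ_{k=0}^{2^{ℓ−2}−1} ( ∫_{2k·2^{−ℓ}}^{(2k+1)·2^{−ℓ}} |f(y) − f(y + 2^{−ℓ})| dy )² ≤ C² · π² · 2^{−ℓ−1}. -/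
/-!
Write `h = 2^{-ℓ}`. All points involved lie in `(0, 1/2]`, where the growth condition reads
`|f'(y)| ≤ C / y`, so comparison with `C log` gives `|f y - f (y + h)| ≤ C (log (y + h) - log y)`.
On the first interval `[0, h]` the singularity is integrable and the integral is at most
`2 C h log 2 ≤ 2 C h`; on the `k`-th interval, `k ≥ 1`, the integrand is at most
`C h / y ≤ C / (2 k)`, and the integral at most `C h / (2 k)`. The squares therefore sum to at most
`C² h² (4 + ζ(2) / 4) = C² h² (4 + π² / 24)`, which is below `C² h² π² / 2` as `π > 3`.
-/

/-- Comparison of the increments of `f` with those of `C log` on the left half of the interval. -/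
lemma abs_sub_le_log_increment (C : ℝ) (f f' : ℝ → ℝ)
    (hderiv : ∀ y ∈ Set.Ioo (0 : ℝ) 1, HasDerivAt f (f' y) y)
    (hbound : ∀ y ∈ Set.Ioo (0 : ℝ) 1, |f' y| ≤ C / min y (1 - y))
    {a b : ℝ} (ha : 0 < a) (hab : a ≤ b) (hb : b ≤ 1 / 2) :
    |f a - f b| ≤ C * (Real.log b - Real.log a) := by
  have hmem : ∀ x ∈ Set.Icc a b, x ∈ Set.Ioo (0 : ℝ) 1 := fun x hx =>
    ⟨by linarith [hx.1], by linarith [hx.2]⟩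
  have hB : ∀ x ∈ Set.Icc a b,
      HasDerivAt (fun x => C * (Real.log x - Real.log a)) (C * x⁻¹) x := fun x hx =>
    ((Real.hasDerivAt_log (hmem x hx).1.ne').sub_const _).const_mul C
  have hF : ∀ x ∈ Set.Icc a b, HasDerivAt (fun x => f x - f a) (f' x) x := fun x hx =>
    (hderiv x (hmem x hx)).sub_const _
  have key := image_norm_le_of_norm_deriv_right_le_deriv_boundary'
    (f := fun x => f x - f a) (f' := f') (a := a) (b := b)
    (B := fun x => C * (Real.log x - Real.log a)) (B' := fun x => C * x⁻¹)
    (fun x hx => (hF x hx).continuousAt.continuousWithinAt)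
    (fun x hx => (hF x (Set.Ico_subset_Icc_self hx)).hasDerivWithinAt)
    (by simp)
    (fun x hx => (hB x hx).continuousAt.continuousWithinAt)
    (fun x hx => (hB x (Set.Ico_subset_Icc_self hx)).hasDerivWithinAt)
    (fun x hx => by
      have h1 := hbound x (hmem x (Set.Ico_subset_Icc_self hx))
      rwa [min_eq_left (by linarith [hx.2]), div_eq_mul_inv] at h1)
    (Set.right_mem_Icc.2 hab)
  rw [abs_sub_comm]
  exact key

lemma integral_log_increment (h : ℝ) (hh : 0 < h) :
    ∫ y in (0 : ℝ)..h, (Real.log (y + h) - Real.log y) = 2 * h * Real.log 2 := by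
  have i1 : IntervalIntegrable (fun y : ℝ => Real.log (y + h)) MeasureTheory.volume 0 h := by
    apply ContinuousOn.intervalIntegrable
    intro x hx
    rw [Set.uIcc_of_le hh.le] at hx
    have : x + h ≠ 0 := by linarith [hx.1]
    fun_prop (disch := assumption)
  rw [intervalIntegral.integral_sub i1 intervalIntegral.intervalIntegrable_log',
    intervalIntegral.integral_comp_add_right (fun y => Real.log y), integral_log, integral_log,
    ← two_mul, Real.log_mul two_ne_zero hh.ne']
  simp
  ring

theorem walsh_energy_decay_one_dim
    (C : ℝ) (hC : 0 < C) (ℓ : ℕ) (hℓ : 2 ≤ ℓ)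
    (f f' : ℝ → ℝ)
    (hderiv : ∀ y ∈ Set.Ioo (0 : ℝ) 1, HasDerivAt f (f' y) y)
    (hbound : ∀ y ∈ Set.Ioo (0 : ℝ) 1, |f' y| ≤ C / min y (1 - y)) :
    (2 : ℝ) ^ ℓ * ∑ k ∈ Finset.range (2 ^ (ℓ - 2)),
        (∫ y in (2 * (k : ℝ) / 2 ^ ℓ)..((2 * (k : ℝ) + 1) / 2 ^ ℓ),
          |f y - f (y + ((2 : ℝ) ^ ℓ)⁻¹)|) ^ 2
      ≤ C ^ 2 * Real.pi ^ 2 / 2 ^ (ℓ + 1) := by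
  obtain ⟨h, hh⟩ : ∃ h : ℝ, h = ((2 : ℝ) ^ ℓ)⁻¹ := ⟨_, rfl⟩
  have hpos : 0 < h := by rw [hh]; positivity
  have hquarter : (2 : ℝ) ^ (ℓ - 2) * h = 1 / 4 := by
    obtain ⟨m, rfl⟩ := Nat.exists_eq_add_of_le hℓ
    rw [hh, Nat.add_sub_cancel_left, pow_add]
    field_simp
    norm_num
  have hpow : (2 : ℝ) ^ ℓ = h⁻¹ := by rw [hh, inv_inv]
  simp only [pow_succ (2 : ℝ) ℓ, hpow, inv_inv, div_inv_eq_mul]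
  have hlog : ∀ k ∈ Finset.range (2 ^ (ℓ - 2)), ∀ y ∈ Set.Ioc (2 * (k : ℝ) * h)
      ((2 * (k : ℝ) + 1) * h),
      0 < y ∧ |f y - f (y + h)| ≤ C * (Real.log (y + h) - Real.log y) := by
    intro k hk y hy
    have hk1 : (k : ℝ) + 1 ≤ 2 ^ (ℓ - 2) := by
      exact_mod_cast Finset.mem_range.1 hk
    have hk0 : 0 ≤ 2 * (k : ℝ) * h := by positivity
    have hy0 : 0 < y := hk0.trans_lt hy.1
    have h2 := mul_le_mul_of_nonneg_right hk1 hpos.le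
    exact ⟨hy0, abs_sub_le_log_increment C f f' hderiv hbound hy0 (by linarith)
      (by linarith [hy.2])⟩
  have hterm : ∀ k ∈ Finset.range (2 ^ (ℓ - 2)),
      (∫ y in (2 * (k : ℝ) * h)..((2 * (k : ℝ) + 1) * h), |f y - f (y + h)|) ^ 2
        ≤ (if k = 0 then 4 * (C * h) ^ 2 else 0) + (C * h) ^ 2 / 4 * (1 / (k : ℝ) ^ 2) := by
    intro k hk
    rcases Nat.eq_zero_or_pos k with rfl | hk0
    · have hl := hlog 0 hk
      simp only [Nat.cast_zero, mul_zero, zero_mul, zero_add, one_mul] at hl ⊢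
      -- Non-integrable functions have integral zero, so a nonzero value gives integrability.
      have hInt : IntervalIntegrable (fun y => C * (Real.log (y + h) - Real.log y))
          MeasureTheory.volume 0 h := by
        apply IntervalIntegrable.const_mul
        by_contra hcon
        have h0 := intervalIntegral.integral_undef hcon
        rw [integral_log_increment h hpos] at h0
        have : 0 < 2 * h * Real.log 2 := by have := Real.log_pos one_lt_two; positivity
        linarith
      have h1 := intervalIntegral.norm_integral_le_of_norm_le (μ := MeasureTheory.volume)
        (f := fun y => |f y - f (y + h)|) hpos.le
        (Filter.Eventually.of_forall fun y hy => by
          rw [Real.norm_eq_abs, abs_abs]; exact (hl y hy).2) hInt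
      rw [intervalIntegral.integral_const_mul, integral_log_increment h hpos,
        Real.norm_eq_abs] at h1
      have h2 : C * (2 * h * Real.log 2) ≤ 2 * (C * h) := by
        nlinarith [Real.log_two_lt_d9, mul_pos hC hpos]
      have h3 := sq_le_sq' (by linarith [neg_abs_le (∫ y in (0:ℝ)..h, |f y - f (y + h)|)])
        ((le_abs_self _).trans (h1.trans h2))
      simp only [if_true]
      norm_num
      linarith
    · have hkr : (0 : ℝ) < k := by exact_mod_cast hk0
      have hle : 2 * (k : ℝ) * h ≤ (2 * (k : ℝ) + 1) * h := by nlinarith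
      have h1 := intervalIntegral.norm_integral_le_of_norm_le_const
        (f := fun y => |f y - f (y + h)|) (C := C / (2 * k))
        (a := 2 * (k : ℝ) * h) (b := (2 * (k : ℝ) + 1) * h) (by
          intro y hy
          rw [Set.uIoc_of_le hle] at hy
          obtain ⟨hy0, hyl⟩ := hlog k hk y hy
          rw [Real.norm_eq_abs, abs_abs]
          refine hyl.trans ?_
          rw [div_eq_mul_one_div]
          refine mul_le_mul_of_nonneg_left ?_ hC.le
          rw [← Real.log_div (by linarith) hy0.ne']
          refine (Real.log_le_sub_one_of_pos (by positivity)).trans ?_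
          rw [add_div, div_self hy0.ne', add_sub_cancel_left, div_le_div_iff₀ hy0 (by positivity)]
          linarith [hy.1])
      have h2 : (2 * (k : ℝ) + 1) * h - 2 * (k : ℝ) * h = h := by ring
      rw [h2, abs_of_pos hpos, Real.norm_eq_abs] at h1
      have h3 := pow_le_pow_left₀ (abs_nonneg _) h1 2
      rw [sq_abs] at h3
      rw [if_neg hk0.ne', zero_add]
      refine h3.trans_eq ?_
      field_simp
      norm_num
  have hzeta := sum_le_hasSum (Finset.range (2 ^ (ℓ - 2)))
    (fun k _ => by positivity) hasSum_zeta_two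
  have hsum := Finset.sum_le_sum hterm
  rw [Finset.sum_add_distrib, ← Finset.mul_sum, Finset.sum_ite_eq',
    if_pos (Finset.mem_range.2 (by positivity))] at hsum
  have htot := hsum.trans (add_le_add_right
    (mul_le_mul_of_nonneg_left hzeta (by positivity : 0 ≤ (C * h) ^ 2 / 4)) _)
  have hpi : 4 + Real.pi ^ 2 / 24 ≤ Real.pi ^ 2 / 2 := by nlinarith [Real.pi_gt_three]
  have hfin := htot.trans (b := _) (c := (C * h) ^ 2 * (Real.pi ^ 2 / 2)) (by
    nlinarith [mul_le_mul_of_nonneg_left hpi (sq_nonneg (C * h))])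
  refine (mul_le_mul_of_nonneg_left hfin (inv_nonneg.2 hpos.le)).trans_eq ?_
  field_simp
end

section
/- Let d ≥ 0 be an integer and let f ∈ L¹([0,1]^{d+1}). Let ℓ = (l₁,…,l_{d+1}) ∈ ℕ^{d+1} with every l_j ≥ 1, and let t ∈ [0,1)^{d+1}. Then Σ_{w ⊆ {1,…,d+1}} (−1)^{|w|} · (Π_{j=1}^{d+1} 2^{l_j − 1[j∈w]}) · ∫_{A_w(t)} f(y) dy = (Π_{j=1}^{d+1} 2^{l_j − 1}) · Σ_{v ⊆ {1,…,d+1}} (−1)^{|v|} · ∫_{J_v(t)} f(y) dy, where A_w(t) = { y ∈ [0,1)^{d+1} : ⌊y_j · 2^{l_j − 1[j∈w]}⌋ = ⌊t_j · 2^{l_j − 1[j∈w]}⌋ for all j }, J_v(t) = { y ∈ [0,1)^{d+1} : ⌊y_j · 2^{l_j}⌋ = 2⌊t_j · 2^{l_j − 1}⌋ + ξ_{v,j}(t) for all j } and ξ_{v,j}(t) = (⌊t_j · 2^{l_j}⌋ − 2⌊t_j · 2^{l_j−1}⌋ + 1[j∈v]) mod 2. Here 1[j∈w] is 1 if j ∈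 w and 0 otherwise, and |w| denotes the cardinality of w. -/
open MeasureTheory

/-!
Weighting each integral by a product of one-dimensional coefficients, both sides are signed sums over
subsets of integrals over boxes. Since the indicator of a box is the product of the indicators of its
sides, expanding `∏ j, (a j * 1_{S j} - b j * 1_{T j})` over subsets turns such a signed sum into one
integral of `f` against a product of functions of one variable (`signed_sum_setIntegral_box`). The
identity then reduces to equality of the one-variable factors (`dyadic_factor`): a dyadic interval of
length `2^{-(l-1)}` is the union of its two halves, so
`2^l 1_{half of t} - 2^{l-1} 1_{whole} = 2^{l-1} (1_{half of t} - 1_{other half})`.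
-/

/-- The multi-affine expansion `∏ (a - b) = ∑_w (-1)^|w| ∏_{j ∈ w} b_j ∏_{j ∉ w} a_j`. -/
lemma prod_sub_eq_sum_ite {n : ℕ} (a b : Fin n → ℝ) :
    ∏ j, (a j - b j) =
      ∑ w : Finset (Fin n), (-1 : ℝ) ^ w.card * ∏ j, (if j ∈ w then b j else a j) := by
  have h : ∀ j, a j - b j = (-1 * b j) + a j := fun j => by ring
  simp_rw [h]
  rw [Finset.prod_add, Finset.powerset_univ]
  refine Finset.sum_congr rfl fun w _ => ?_
  rw [Finset.prod_mul_distrib, Finset.prod_const, mul_assoc, Finset.prod_ite]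
  congr 3
  · ext j; simp
  · ext j; simp

lemma measurableSet_box {n : ℕ} {S : Fin n → Set ℝ} (hS : ∀ j, MeasurableSet (S j)) :
    MeasurableSet {y : Fin n → ℝ | ∀ j, y j ∈ S j} := by
  have : {y : Fin n → ℝ | ∀ j, y j ∈ S j} = Set.univ.pi S := by ext; simp
  rw [this]
  exact MeasurableSet.univ_pi hS

/-- A signed, weighted sum over subsets `w` of integrals over boxes with sides `T j` (`j ∈ w`) and
`S j` (`j ∉ w`) is a single integral against a product of one-variable functions. -/
lemma signed_sum_setIntegral_box {n : ℕ} {f : (Fin n → ℝ) → ℝ}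
    (hf : IntegrableOn f (Set.univ.pi fun _ : Fin n => Set.Icc (0 : ℝ) 1) volume)
    (a b : Fin n → ℝ) (S T : Fin n → Set ℝ)
    (hS : ∀ j, MeasurableSet (S j)) (hT : ∀ j, MeasurableSet (T j))
    (hS' : ∀ j, S j ⊆ Set.Icc 0 1) (hT' : ∀ j, T j ⊆ Set.Icc 0 1) :
    ∑ w : Finset (Fin n), (-1 : ℝ) ^ w.card * (∏ j, (if j ∈ w then b j else a j)) *
        ∫ y in {y : Fin n → ℝ | ∀ j, y j ∈ (if j ∈ w then T j else S j)}, f y =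
      ∫ y, (∏ j, (a j * (S j).indicator 1 (y j) - b j * (T j).indicator 1 (y j))) * f y := by
  have hM : ∀ w : Finset (Fin n),
      MeasurableSet {y : Fin n → ℝ | ∀ j, y j ∈ (if j ∈ w then T j else S j)} := fun w =>
    measurableSet_box fun j => by split_ifs <;> simp [hS, hT]
  have hsub : ∀ w : Finset (Fin n), {y : Fin n → ℝ | ∀ j, y j ∈ (if j ∈ w then T j else S j)} ⊆
      Set.univ.pi fun _ : Fin n => Set.Icc (0 : ℝ) 1 := fun w y hy j _ => by
    have := hy j
    split_ifs at this
    exacts [hT' j this, hS' j this]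
  simp_rw [← integral_indicator (hM _), ← integral_const_mul]
  rw [← integral_finsetSum _ fun w _ =>
    (((integrable_indicator_iff (hM w)).2 (hf.mono_set (hsub w))).const_mul _)]
  refine integral_congr_ae (Filter.Eventually.of_forall fun y => ?_)
  simp only
  rw [prod_sub_eq_sum_ite, Finset.sum_mul]
  refine Finset.sum_congr rfl fun w _ => ?_
  rw [mul_assoc, mul_assoc]
  congr 1
  by_cases hy : ∀ j, y j ∈ (if j ∈ w then T j else S j)
  · rw [Set.indicator_of_mem (by exact hy)]
    congr 1
    refine Finset.prod_congr rfl fun j _ => ?_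
    have := hy j
    split_ifs at this ⊢ <;> simp [this]
  · rw [Set.indicator_of_notMem (by exact hy)]
    push Not at hy
    obtain ⟨j, hj⟩ := hy
    have h0 : (∏ j, if j ∈ w then b j * (T j).indicator 1 (y j)
        else a j * (S j).indicator 1 (y j)) = 0 :=
      Finset.prod_eq_zero (Finset.mem_univ j) (by split_ifs at hj ⊢ <;> simp [hj])
    rw [h0, zero_mul, mul_zero]

/-- Deleting the last of `l` binary digits halves the integer part. -/
lemma floor_mul_two_pow_pred (x : ℝ) {l : ℕ} (hl : 1 ≤ l) :
    ⌊x * (2 : ℝ) ^ (l - 1)⌋ = ⌊x * (2 : ℝ) ^ l⌋ / 2 := by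
  obtain ⟨k, rfl⟩ := Nat.exists_eq_add_of_le' hl
  have h := Int.floor_div_natCast (x * (2 : ℝ) ^ (k + 1)) 2
  rw [Nat.cast_ofNat, Nat.cast_ofNat] at h
  rw [← h, Nat.add_sub_cancel, pow_succ]
  congr 1
  ring

lemma measurableSet_Ico_floor (c : ℝ) (m : ℤ) :
    MeasurableSet {x : ℝ | x ∈ Set.Ico (0 : ℝ) 1 ∧ ⌊x * c⌋ = m} :=
  measurableSet_Ico.inter
    ((Int.measurable_floor.comp (measurable_id.mul_const c)) (measurableSet_singleton m))

/-- The one-variable identity: the dyadic interval of order `l - 1` around `t` is split into the half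
containing `t` and its sibling, which differs in the `l`-th binary digit. -/
lemma dyadic_factor (t x : ℝ) {l : ℕ} (hl : 1 ≤ l) :
    (2 : ℝ) ^ l * {x : ℝ | x ∈ Set.Ico (0 : ℝ) 1 ∧
          ⌊x * (2 : ℝ) ^ l⌋ = ⌊t * (2 : ℝ) ^ l⌋}.indicator 1 x -
      (2 : ℝ) ^ (l - 1) * {x : ℝ | x ∈ Set.Ico (0 : ℝ) 1 ∧
          ⌊x * (2 : ℝ) ^ (l - 1)⌋ = ⌊t * (2 : ℝ) ^ (l - 1)⌋}.indicator 1 x =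
    (2 : ℝ) ^ (l - 1) * {x : ℝ | x ∈ Set.Ico (0 : ℝ) 1 ∧
          ⌊x * (2 : ℝ) ^ l⌋ = 2 * ⌊t * (2 : ℝ) ^ (l - 1)⌋ +
            (⌊t * (2 : ℝ) ^ l⌋ - 2 * ⌊t * (2 : ℝ) ^ (l - 1)⌋ + 0) % 2}.indicator 1 x -
      (2 : ℝ) ^ (l - 1) * {x : ℝ | x ∈ Set.Ico (0 : ℝ) 1 ∧
          ⌊x * (2 : ℝ) ^ l⌋ = 2 * ⌊t * (2 : ℝ) ^ (l - 1)⌋ +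
            (⌊t * (2 : ℝ) ^ l⌋ - 2 * ⌊t * (2 : ℝ) ^ (l - 1)⌋ + 1) % 2}.indicator 1 x := by
  have h2 : (2 : ℝ) ^ l = 2 * 2 ^ (l - 1) := by rw [← pow_succ', Nat.sub_add_cancel hl]
  have hx := floor_mul_two_pow_pred x hl
  have ht := floor_mul_two_pow_pred t hl
  simp only [Set.indicator_apply, Set.mem_ofPred_eq, hx, ht, Pi.one_apply]
  generalize ⌊x * (2 : ℝ) ^ l⌋ = p
  generalize ⌊t * (2 : ℝ) ^ l⌋ = q
  rw [h2]
  by_cases hI : x ∈ Set.Ico (0 : ℝ) 1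
  · simp only [hI, true_and]
    split_ifs <;> first | (exfalso; omega) | ring
  · simp [hI]

/-- Alternating-sum identity for dyadic local averages, all `l_j ≥ 1`:
`Σ_{w ⊆ {1,…,d+1}} (−1)^{|w|} (Π_j 2^{l_j − 1[j∈w]}) ∫_{A_w(t)} f
  = (Π_j 2^{l_j−1}) Σ_{v ⊆ {1,…,d+1}} (−1)^{|v|} ∫_{J_v(t)} f`. -/
theorem dyadic_alternating_sum_identity
    (d : ℕ) (f : (Fin (d + 1) → ℝ) → ℝ)
    (hf : IntegrableOn f (Set.univ.pi fun _ : Fin (d + 1) => Set.Icc (0 : ℝ) 1) volume)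
    (ℓ : Fin (d + 1) → ℕ) (hℓ : ∀ j, 1 ≤ ℓ j)
    (t : Fin (d + 1) → ℝ) (ht : ∀ j, t j ∈ Set.Ico (0 : ℝ) 1) :
    ∑ w : Finset (Fin (d + 1)),
        (-1 : ℝ) ^ w.card *
          (∏ j, (2 : ℝ) ^ (ℓ j - if j ∈ w then 1 else 0)) *
          ∫ y in {y : Fin (d + 1) → ℝ | ∀ j, y j ∈ Set.Ico (0 : ℝ) 1 ∧
              ⌊y j * (2 : ℝ) ^ (ℓ j - if j ∈ w then 1 else 0)⌋
                = ⌊t j * (2 : ℝ) ^ (ℓ j - if j ∈ w then 1 else 0)⌋}, f y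
      = (∏ j, (2 : ℝ) ^ (ℓ j - 1)) *
          ∑ v : Finset (Fin (d + 1)),
            (-1 : ℝ) ^ v.card *
              ∫ y in {y : Fin (d + 1) → ℝ | ∀ j, y j ∈ Set.Ico (0 : ℝ) 1 ∧
                  ⌊y j * (2 : ℝ) ^ (ℓ j)⌋
                    = 2 * ⌊t j * (2 : ℝ) ^ (ℓ j - 1)⌋ +
                      (⌊t j * (2 : ℝ) ^ (ℓ j)⌋ - 2 * ⌊t j * (2 : ℝ) ^ (ℓ j - 1)⌋ +
                        (if j ∈ v then 1 else 0)) % 2}, f y := by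
  have hIcc : ∀ (c : ℝ) (m : ℤ),
      {x : ℝ | x ∈ Set.Ico (0 : ℝ) 1 ∧ ⌊x * c⌋ = m} ⊆ Set.Icc 0 1 :=
    fun c m x hx => Set.Ico_subset_Icc_self hx.1
  have hL := signed_sum_setIntegral_box hf (fun j => (2 : ℝ) ^ ℓ j) (fun j => (2 : ℝ) ^ (ℓ j - 1))
    (fun j => {x : ℝ | x ∈ Set.Ico (0 : ℝ) 1 ∧ ⌊x * (2 : ℝ) ^ ℓ j⌋ = ⌊t j * (2 : ℝ) ^ ℓ j⌋})
    (fun j => {x : ℝ | x ∈ Set.Ico (0 : ℝ) 1 ∧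
      ⌊x * (2 : ℝ) ^ (ℓ j - 1)⌋ = ⌊t j * (2 : ℝ) ^ (ℓ j - 1)⌋})
    (fun _ => measurableSet_Ico_floor _ _) (fun _ => measurableSet_Ico_floor _ _)
    (fun _ => hIcc _ _) (fun _ => hIcc _ _)
  have hR := signed_sum_setIntegral_box hf
    (fun j => (2 : ℝ) ^ (ℓ j - 1)) (fun j => (2 : ℝ) ^ (ℓ j - 1))
    (fun j => {x : ℝ | x ∈ Set.Ico (0 : ℝ) 1 ∧ ⌊x * (2 : ℝ) ^ ℓ j⌋ =
      2 * ⌊t j * (2 : ℝ) ^ (ℓ j - 1)⌋ +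
        (⌊t j * (2 : ℝ) ^ ℓ j⌋ - 2 * ⌊t j * (2 : ℝ) ^ (ℓ j - 1)⌋ + 0) % 2})
    (fun j => {x : ℝ | x ∈ Set.Ico (0 : ℝ) 1 ∧ ⌊x * (2 : ℝ) ^ ℓ j⌋ =
      2 * ⌊t j * (2 : ℝ) ^ (ℓ j - 1)⌋ +
        (⌊t j * (2 : ℝ) ^ ℓ j⌋ - 2 * ⌊t j * (2 : ℝ) ^ (ℓ j - 1)⌋ + 1) % 2})
    (fun _ => measurableSet_Ico_floor _ _) (fun _ => measurableSet_Ico_floor _ _)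
    (fun _ => hIcc _ _) (fun _ => hIcc _ _)
  simp_rw [dyadic_factor _ _ (hℓ _)] at hL
  rw [← hR] at hL
  refine Eq.trans ?_ (hL.trans ?_)
  · refine Finset.sum_congr rfl fun w _ => ?_
    congr 2
    · refine congrArg _ (funext fun j => ?_)
      split_ifs <;> simp
    · congr 1
      ext y
      refine forall_congr' fun j => ?_
      split_ifs <;> simp
  · rw [Finset.mul_sum]
    refine Finset.sum_congr rfl fun v _ => ?_
    simp only [ite_self]
    rw [mul_comm ((-1 : ℝ) ^ v.card), mul_assoc]
    congr 4
    ext y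
    refine forall_congr' fun j => ?_
    split_ifs <;> simp
end

section
/- Let d ≥ 0 be an integer and let f ∈ L¹([0,1]^{d+1}). Let ℓ = (l₁,…,l_{d+1}) ∈ ℕ₀^{d+1} with nonempty support u = { j : l_j ≥ 1 }, and let t ∈ [0,1)^{d+1}. Then Σ_{w ⊆ u} (−1)^{|w|} · (Π_{j=1}^{d+1} 2^{l_j − 1[j∈w]}) · ∫_{A_w(t)} f(y) dy = (Π_{j∈u} 2^{l_j − 1}) · Σ_{v ⊆ u} (−1)^{|v|} · ∫_{J_v(t)} f(y) dy, where A_w(t) = { y ∈ [0,1)^{d+1} : ⌊y_j · 2^{l_j − 1[j∈w]}⌋ = ⌊t_j · 2^{l_j − 1[j∈w]}⌋ for all j }, J_v(t) = { y ∈ [0,1)^{d+1} : ⌊y_j · 2^{l_j}⌋ = 2⌊t_j · 2^{l_j − 1}⌋ + ξ_{v,j}(t) for all j ∈ u } (coordinates y_j for j ∉ u ranging freely over [0,1)), and ξ_{v,j}(t) = (⌊t_j · 2^{l_j}⌋ − 2⌊t_j · 2^{l_j−1}⌋ + 1[j∈v]) mod 2. Here 1[j∈w] is 1 if j ∈ w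 and 0 otherwise, and |w| denotes the cardinality of w. -/
/-!
The identity is the integral of a pointwise identity between step functions. On `[0,1)^{d+1}` the
indicators of `A_w(t)` and `J_v(t)` are products of one-dimensional indicators, so expanding a
product of differences (`sum_powerset_neg_one_pow_prod_ite`) turns each alternating sum into a
product over `j ∈ u`, and the two products agree factor by factor: a dyadic interval of
level `l - 1` is the disjoint union of its two halves of level `l`, whence
`2^l 1_I - 2^(l-1) 1_parent = 2^(l-1) (1_I - 1_sibling)` (`dyadic_factor_identity`). The
coordinates outside `u` contribute the factor `1`. Integrability of `f` enters only to
interchange the finite sums with the integral (`sum_setIntegral_eq_of_indicator`).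
-/

open MeasureTheory

/-- Expansion of a product of differences, with sign `-1` for each factor taken from `q`. -/
lemma sum_powerset_neg_one_pow_prod_ite {ι : Type*} [DecidableEq ι] (u : Finset ι) (p q : ι → ℝ) :
    ∑ w ∈ u.powerset, (-1 : ℝ) ^ w.card * ∏ j ∈ u, (if j ∈ w then q j else p j)
      = ∏ j ∈ u, (p j - q j) := by
  have h : ∏ j ∈ u, (p j - q j) = ∏ j ∈ u, (-q j + p j) :=
    Finset.prod_congr rfl fun j _ => by ring
  rw [h, Finset.prod_add]
  refine Finset.sum_congr rfl fun w hw => ?_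
  rw [Finset.mem_powerset] at hw
  rw [Finset.prod_ite, Finset.prod_neg, mul_assoc, Finset.filter_mem_eq_inter,
    Finset.inter_eq_right.mpr hw, Finset.filter_notMem_eq_sdiff]

/-- Doubling refines the integer part by one binary digit. -/
lemma floor_dyadic_succ (x : ℝ) (k : ℕ) :
    2 * ⌊x * (2 : ℝ) ^ k⌋ ≤ ⌊x * (2 : ℝ) ^ (k + 1)⌋ ∧
      ⌊x * (2 : ℝ) ^ (k + 1)⌋ ≤ 2 * ⌊x * (2 : ℝ) ^ k⌋ + 1 := by
  have h1 := Int.floor_le (x * (2 : ℝ) ^ k)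
  have h2 := Int.lt_floor_add_one (x * (2 : ℝ) ^ k)
  have h3 : x * (2 : ℝ) ^ (k + 1) = 2 * (x * (2 : ℝ) ^ k) := by ring
  rw [h3]
  constructor
  · rw [Int.le_floor]
    push_cast
    linarith
  · rw [← Int.lt_add_one_iff, Int.floor_lt]
    push_cast
    linarith

/-- The one-dimensional identity `2^l 1_I - 2^(l-1) 1_parent = 2^(l-1) (1_I - 1_sibling)`, where
`I` is the dyadic interval of level `l` containing `t`; adding `0` or `1` to the last binary digit
modulo `2` selects `I` or its sibling. -/
lemma dyadic_factor_identity (y t : ℝ) (l : ℕ) (hl : 1 ≤ l) :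
    (2 : ℝ) ^ l * (if ⌊y * (2 : ℝ) ^ l⌋ = ⌊t * (2 : ℝ) ^ l⌋ then 1 else 0)
      - (2 : ℝ) ^ (l - 1) *
        (if ⌊y * (2 : ℝ) ^ (l - 1)⌋ = ⌊t * (2 : ℝ) ^ (l - 1)⌋ then 1 else 0)
      = (2 : ℝ) ^ (l - 1) *
        ((if ⌊y * (2 : ℝ) ^ l⌋ = 2 * ⌊t * (2 : ℝ) ^ (l - 1)⌋ +
            (⌊t * (2 : ℝ) ^ l⌋ - 2 * ⌊t * (2 : ℝ) ^ (l - 1)⌋ + 0) % 2 then 1 else 0)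
        - (if ⌊y * (2 : ℝ) ^ l⌋ = 2 * ⌊t * (2 : ℝ) ^ (l - 1)⌋ +
            (⌊t * (2 : ℝ) ^ l⌋ - 2 * ⌊t * (2 : ℝ) ^ (l - 1)⌋ + 1) % 2 then 1 else 0)) := by
  obtain ⟨k, rfl⟩ := Nat.exists_eq_add_of_le' hl
  rw [Nat.add_sub_cancel]
  obtain ⟨hy1, hy2⟩ := floor_dyadic_succ y k
  obtain ⟨ht1, ht2⟩ := floor_dyadic_succ t k
  rw [pow_succ (2 : ℝ) k] at *
  generalize ⌊y * ((2 : ℝ) ^ k * 2)⌋ = Y at *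
  generalize ⌊t * ((2 : ℝ) ^ k * 2)⌋ = T at *
  generalize ⌊y * (2 : ℝ) ^ k⌋ = Y' at *
  generalize ⌊t * (2 : ℝ) ^ k⌋ = T' at *
  split_ifs <;> first | (exfalso; omega) | ring

/-- A pointwise identity between combinations of indicators integrates against `f`. -/
lemma sum_setIntegral_eq_of_indicator {α ι : Type*} [MeasurableSpace α] {μ : Measure α}
    (f : α → ℝ) (s : Finset ι) (a b : ι → ℝ) (S T : ι → Set α)
    (hS : ∀ i, MeasurableSet (S i)) (hT : ∀ i, MeasurableSet (T i))
    (hfS : ∀ i, IntegrableOn f (S i) μ) (hfT : ∀ i, IntegrableOn f (T i) μ)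
    (h : ∀ y, ∑ i ∈ s, a i * (S i).indicator 1 y = ∑ i ∈ s, b i * (T i).indicator 1 y) :
    ∑ i ∈ s, a i * ∫ y in S i, f y ∂μ = ∑ i ∈ s, b i * ∫ y in T i, f y ∂μ := by
  have key : ∀ (c : ι → ℝ) (R : ι → Set α), (∀ i, MeasurableSet (R i)) →
      (∀ i, IntegrableOn f (R i) μ) →
      ∑ i ∈ s, c i * ∫ y in R i, f y ∂μ
        = ∫ y, (∑ i ∈ s, c i * (R i).indicator 1 y) * f y ∂μ := by
    intro c R hR hfR
    have h1 : ∀ y, (∑ i ∈ s, c i * (R i).indicator 1 y) * f y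
        = ∑ i ∈ s, c i * (R i).indicator f y := by
      intro y
      rw [Finset.sum_mul]
      refine Finset.sum_congr rfl fun i _ => ?_
      by_cases hy : y ∈ R i <;> simp [hy]
    simp_rw [h1]
    rw [integral_finsetSum _ fun i _ => ((hfR i).integrable_indicator (hR i)).const_mul (c i)]
    refine Finset.sum_congr rfl fun i _ => ?_
    rw [integral_const_mul, integral_indicator (hR i)]
  rw [key a S hS hfS, key b T hT hfT]
  simp_rw [h]

/-- Alternating-sum identity for dyadic local averages with
nonempty support `u = {j : l_j ≥ 1}`:
`Σ_{w ⊆ u} (−1)^{|w|} (Π_j 2^{l_j − 1[j∈w]}) ∫_{A_w(t)} f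
  = (Π_{j∈u} 2^{l_j−1}) Σ_{v ⊆ u} (−1)^{|v|} ∫_{J_v(t)} f`,
where in `J_v(t)` only the coordinates in `u` are constrained, the others ranging
freely over `[0,1)`. -/
theorem dyadic_alternating_sum_identity_support
    (d : ℕ) (f : (Fin (d + 1) → ℝ) → ℝ)
    (hf : IntegrableOn f (Set.univ.pi fun _ : Fin (d + 1) => Set.Icc (0 : ℝ) 1) volume)
    (ℓ : Fin (d + 1) → ℕ)
    (hu : (Finset.univ.filter fun j : Fin (d + 1) => 1 ≤ ℓ j).Nonempty)
    (t : Fin (d + 1) → ℝ) (ht : ∀ j, t j ∈ Set.Ico (0 : ℝ) 1) :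
    ∑ w ∈ (Finset.univ.filter fun j : Fin (d + 1) => 1 ≤ ℓ j).powerset,
        (-1 : ℝ) ^ w.card *
          (∏ j, (2 : ℝ) ^ (ℓ j - if j ∈ w then 1 else 0)) *
          ∫ y in {y : Fin (d + 1) → ℝ | ∀ j, y j ∈ Set.Ico (0 : ℝ) 1 ∧
              ⌊y j * (2 : ℝ) ^ (ℓ j - if j ∈ w then 1 else 0)⌋
                = ⌊t j * (2 : ℝ) ^ (ℓ j - if j ∈ w then 1 else 0)⌋}, f y
      = (∏ j ∈ Finset.univ.filter fun j : Fin (d + 1) => 1 ≤ ℓ j,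
            (2 : ℝ) ^ (ℓ j - 1)) *
          ∑ v ∈ (Finset.univ.filter fun j : Fin (d + 1) => 1 ≤ ℓ j).powerset,
            (-1 : ℝ) ^ v.card *
              ∫ y in {y : Fin (d + 1) → ℝ | (∀ j, y j ∈ Set.Ico (0 : ℝ) 1) ∧
                  ∀ j ∈ Finset.univ.filter fun j : Fin (d + 1) => 1 ≤ ℓ j,
                    ⌊y j * (2 : ℝ) ^ (ℓ j)⌋
                      = 2 * ⌊t j * (2 : ℝ) ^ (ℓ j - 1)⌋ +
                        (⌊t j * (2 : ℝ) ^ (ℓ j)⌋ - 2 * ⌊t j * (2 : ℝ) ^ (ℓ j - 1)⌋ +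
                          (if j ∈ v then 1 else 0)) % 2}, f y := by
  set u := Finset.univ.filter fun j : Fin (d + 1) => 1 ≤ ℓ j with hu_def
  have hfl : ∀ (c : ℝ) (n : ℤ) (j : Fin (d + 1)),
      MeasurableSet {y : Fin (d + 1) → ℝ | ⌊y j * c⌋ = n} := fun c n j =>
    have hm : Measurable fun y : Fin (d + 1) → ℝ => ⌊y j * c⌋ :=
      ((measurable_pi_apply (X := fun _ : Fin (d + 1) => ℝ) j).mul_const c).floor
    hm (measurableSet_singleton n)
  have hIco : ∀ j : Fin (d + 1), MeasurableSet {y : Fin (d + 1) → ℝ | y j ∈ Set.Ico (0 : ℝ) 1} :=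
    fun j => measurable_pi_apply j measurableSet_Ico
  rw [Finset.mul_sum]
  simp_rw [← mul_assoc]
  refine sum_setIntegral_eq_of_indicator f _ _ _ _ _ (fun w => ?_) (fun v => ?_) (fun w => ?_)
    (fun v => ?_) fun y => ?_
  · simp only [Set.ofPred_forall, Set.ofPred_and]
    exact MeasurableSet.iInter fun j => (hIco j).inter (hfl _ _ j)
  · simp only [Set.ofPred_forall, Set.ofPred_and]
    exact (MeasurableSet.iInter hIco).inter
      (MeasurableSet.iInter fun j => MeasurableSet.iInter fun _ => hfl _ _ j)
  · exact hf.mono_set fun y hy j _ => Set.Ico_subset_Icc_self (hy j).1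
  · exact hf.mono_set fun y hy j _ => Set.Ico_subset_Icc_self (hy.1 j)
  by_cases hy : ∀ j, y j ∈ Set.Ico (0 : ℝ) 1
  swap
  · -- Outside the unit cube all the indicators vanish.
    trans (0 : ℝ)
    · refine Finset.sum_eq_zero fun w _ => ?_
      rw [Set.indicator_of_notMem fun h => hy fun j => (h j).1, mul_zero]
    · refine (Finset.sum_eq_zero fun v _ => ?_).symm
      rw [Set.indicator_of_notMem fun h => hy h.1, mul_zero]
  let F : Fin (d + 1) → ℕ → ℝ := fun j k =>
    (2 : ℝ) ^ k * if ⌊y j * (2 : ℝ) ^ k⌋ = ⌊t j * (2 : ℝ) ^ k⌋ then 1 else 0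
  let G : Fin (d + 1) → ℤ → ℝ := fun j e =>
    if ⌊y j * (2 : ℝ) ^ (ℓ j)⌋ = 2 * ⌊t j * (2 : ℝ) ^ (ℓ j - 1)⌋ +
      (⌊t j * (2 : ℝ) ^ (ℓ j)⌋ - 2 * ⌊t j * (2 : ℝ) ^ (ℓ j - 1)⌋ + e) % 2 then 1 else 0
  trans ∏ j ∈ u, (F j (ℓ j) - F j (ℓ j - 1))
  · rw [← sum_powerset_neg_one_pow_prod_ite]
    refine Finset.sum_congr rfl fun w hw => ?_
    rw [Finset.mem_powerset] at hw
    rw [mul_assoc]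
    congr 1
    trans ∏ j, F j (ℓ j - if j ∈ w then 1 else 0)
    · simp only [F, Finset.prod_mul_distrib, Finset.prod_ite_zero, Finset.prod_const_one, Set.indicator_apply, Set.mem_ofPred_eq,
        Pi.one_apply, Finset.mem_univ, forall_const]
      simp only [hy, true_and]
    · rw [← Finset.prod_subset (Finset.subset_univ u)]
      · refine Finset.prod_congr rfl fun j _ => ?_
        split_ifs <;> simp
      · -- For `l_j = 0` the constraint reads `⌊y_j⌋ = ⌊t_j⌋`, and both integer parts are `0`.
        intro j _ hj
        have h0 : ℓ j = 0 := by simpa [hu_def] using hj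
        simp [F, h0, Int.floor_eq_zero_iff.mpr (hy j), Int.floor_eq_zero_iff.mpr (ht j)]
  · rw [Finset.prod_congr rfl fun j hj => dyadic_factor_identity (y j) (t j) (ℓ j)
      (Finset.mem_filter.mp hj).2, Finset.prod_mul_distrib]
    trans (∏ j ∈ u, (2 : ℝ) ^ (ℓ j - 1)) * ∏ j ∈ u, (G j 0 - G j 1)
    · rfl
    rw [← sum_powerset_neg_one_pow_prod_ite, Finset.mul_sum]
    refine Finset.sum_congr rfl fun v _ => ?_
    rw [mul_assoc]
    congr 2
    trans ∏ j ∈ u, G j (if j ∈ v then 1 else 0)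
    · refine Finset.prod_congr rfl fun j _ => ?_
      split_ifs <;> rfl
    · simp only [G, Finset.prod_ite_zero, Finset.prod_const_one, Set.indicator_apply, Set.mem_ofPred_eq, Pi.one_apply]
      simp only [hy, true_and, implies_true]
end

section
/- Let d ≥ 0 be an integer and C > 0. Let f : [0,1]^{d+1} → ℝ be such that for every subset u ⊆ {1,…,d+1} the mixed first-order partial derivative ∂^u f exists on (0,1)^{d+1} and satisfies |∂^u f(ω)| ≤ C · Π_{j∈u} min(ω_j, 1−ω_j)^{−1} for all ω ∈ (0,1)^{d+1} (in particular |f| ≤ C). Let ℓ = (l₁,…,l_{d+1}) ∈ ℕ₀^{d+1} have nonempty support u = { j : l_j ≥ 1 }, and write ‖ℓ‖₁ = Σ_j l_j. For a vector y and v ⊆ u, let y^{(v)} denote the point whose j-th coordinate is y_j + 2^{−l_j} for j ∈ u∖v and y_j otherwise. Then 2^{(d+1)+‖ℓ‖₁} · Σ_{k_u} ( ∫_{[0,1]^{|u^c|}} ∫_{B(k_u)} Σ_{v ⊆ u} (−1)^{|v|} · f(y^{(v)}) dy_u dy_{u^c} )² ≤ C² · 2^{−‖ℓ‖₁ + 5(d+1)},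 where the outer sum is over all integer vectors k_u = (k_j)_{j∈u} with 0 ≤ k_j ≤ 2^{l_j−1} − 1, B(k_u) = { y_u : ⌊y_j · 2^{l_j}⌋ = 2k_j for all j ∈ u }, and u^c = {1,…,d+1}∖u. -/
/-!
The integrand is the mixed difference of `f`, in the coordinates of `u`, over a box with side
lengths `h_j = 2^{-l_j}`. In a coordinate `j` put `N_j = 2^{l_j - 1}`, so that the block with
index `k_j` and its right neighbour together form the `k_j`-th of `N_j` intervals of length
`2 h_j`. If this interval is away from both endpoints of `[0,1]`, the mean value inequality gives
a factor `h_j · sup 1 / min(ω_j, 1 - ω_j)`, which is at most `2 / min(k_j + 1, N_j - k_j)`. If it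
touches an endpoint, the derivative may blow up there, but the triangle inequality gives the
factor `2`, which is the same expression. The coordinates outside `u` have
`k_j = 0` and `N_j = 1` and contribute a factor `1 ≤ 2`. Hence the mixed difference is at most
`C ∏_j 2 / min(k_j + 1, N_j - k_j)` pointwise (`abs_boxDiff_block_le`). The mean value inequality
for mixed differences (`abs_boxDiff_le_of_iterPDeriv`) needs no continuity of the derivatives:
differencing in one coordinate commutes with differentiating in the others (`iterPDeriv_sub`), so
the coordinates are treated one at a time, outermost derivative first.

The block has volume `2^{-‖ℓ‖₁}`. Squaring, summing over `k` and factoring the sum into a product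
leaves, for each coordinate, `∑_k 4 / min(k + 1, N - k)² ≤ 8 ∑_k 1 / (k + 1)² ≤ 16`
(`sum_blockWeight_sq_le`). In total this is `2^{(d+1) + ‖ℓ‖₁} · C² 2^{-2‖ℓ‖₁} 16^{d+1}`, the
claimed bound.
-/

open MeasureTheory

/-! ### Mixed differences over boxes -/

/-- The open unit cube `(0,1)^n`. -/
abbrev openCube (n : ℕ) : Set (Fin n → ℝ) :=
  Set.univ.pi fun _ : Fin n => Set.Ioo (0 : ℝ) 1

/-- The mixed difference of `f` over the box with opposite corners `p` and `q`, taken in the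
coordinates of `u`; the coordinates outside `u` stay at their values in `p`. -/
noncomputable def boxDiff {n : ℕ} (u : Finset (Fin n)) (p q : Fin n → ℝ)
    (f : (Fin n → ℝ) → ℝ) : ℝ :=
  ∑ v ∈ u.powerset, (-1 : ℝ) ^ v.card * f (fun j => if j ∈ u \ v then q j else p j)

lemma update_mem_openCube {n : ℕ} {ω : Fin n → ℝ} (hω : ω ∈ openCube n) (j : Fin n) {s : ℝ}
    (hs : s ∈ Set.Ioo (0 : ℝ) 1) : Function.update ω j s ∈ openCube n := by
  intro i _
  by_cases h : i = j
  · subst h; simpa using hs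
  · simpa [h] using hω i trivial

lemma boxDiff_empty {n : ℕ} (p q : Fin n → ℝ) (f : (Fin n → ℝ) → ℝ) :
    boxDiff ∅ p q f = f p := by
  simp [boxDiff]

/-- A mixed difference is a one-coordinate difference of mixed differences in the other
coordinates. -/
lemma boxDiff_insert {n : ℕ} {u : Finset (Fin n)} {j : Fin n} (hj : j ∉ u) (p q : Fin n → ℝ)
    (f : (Fin n → ℝ) → ℝ) :
    boxDiff (insert j u) p q f = boxDiff u (Function.update p j (q j)) q f - boxDiff u p q f := by
  unfold boxDiff
  rw [Finset.sum_powerset_insert hj, sub_eq_add_neg, ← Finset.sum_neg_distrib]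
  congr 1
  · refine Finset.sum_congr rfl fun v hv => ?_
    have hjv : j ∉ v := fun h => hj (Finset.mem_powerset.1 hv h)
    congr 2
    funext i
    by_cases h : i = j
    · subst h; simp [hjv, hj]
    · simp [h]
  · refine Finset.sum_congr rfl fun v hv => ?_
    have hjv : j ∉ v := fun h => hj (Finset.mem_powerset.1 hv h)
    rw [Finset.card_insert_of_notMem hjv, pow_succ]
    have : (fun i => if i ∈ insert j u \ insert j v then q i else p i)
        = fun i => if i ∈ u \ v then q i else p i := by
      funext i
      by_cases h : i = j
      · subst h; simp [hj]
      · simp [h]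
    rw [this]; ring

/-- The one-coordinate difference may equally be applied to the function first. -/
lemma boxDiff_insert' {n : ℕ} {u : Finset (Fin n)} {j : Fin n} (hj : j ∉ u) (p q : Fin n → ℝ)
    (f : (Fin n → ℝ) → ℝ) :
    boxDiff (insert j u) p q f = boxDiff u p q
      (fun ω => f (Function.update ω j (q j)) - f (Function.update ω j (p j))) := by
  rw [boxDiff_insert hj]
  unfold boxDiff
  rw [← Finset.sum_sub_distrib]
  refine Finset.sum_congr rfl fun v hv => ?_
  rw [← mul_sub]
  congr 3 <;> funext i <;> by_cases h : i = j
  all_goals first | (subst h; simp [hj]) | simp [h]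

/-! ### Mean value and triangle inequalities for mixed differences -/

lemma hasDerivAt_iterPDeriv {n : ℕ} {j : Fin n} {L : List (Fin n)} {g : (Fin n → ℝ) → ℝ}
    (hg : IterDiffOn (openCube n) (j :: L) g) {ω : Fin n → ℝ} (hω : ω ∈ openCube n) :
    HasDerivAt (fun s => iterPDeriv L g (Function.update ω j s))
      (iterPDeriv (j :: L) g ω) (ω j) :=
  (hg.2 ω hω).hasDerivAt

/-- Differencing in a coordinate `j` outside `L` commutes with the mixed partial derivative
along `L`, and preserves its existence. -/
lemma iterPDeriv_sub {n : ℕ} {j : Fin n} {a b : ℝ} (ha : a ∈ Set.Ioo (0 : ℝ) 1)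
    (hb : b ∈ Set.Ioo (0 : ℝ) 1) (g : (Fin n → ℝ) → ℝ) (L : List (Fin n)) (hj : j ∉ L)
    (hg : IterDiffOn (openCube n) L g) :
    IterDiffOn (openCube n) L
        (fun ω => g (Function.update ω j b) - g (Function.update ω j a)) ∧
      ∀ ω ∈ openCube n,
        iterPDeriv L (fun ω => g (Function.update ω j b) - g (Function.update ω j a)) ω
          = iterPDeriv L g (Function.update ω j b) - iterPDeriv L g (Function.update ω j a) := by
  induction L with
  | nil => exact ⟨trivial, fun _ _ => rfl⟩
  | cons i L ih =>
    have hij : i ≠ j := fun h => hj (by simp [h])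
    obtain ⟨ih1, ih2⟩ := ih (fun h => hj (by simp [h])) hg.1
    have key : ∀ ω ∈ openCube n, HasDerivAt
        (fun s => iterPDeriv L (fun ω => g (Function.update ω j b) - g (Function.update ω j a))
          (Function.update ω i s))
        (iterPDeriv (i :: L) g (Function.update ω j b)
          - iterPDeriv (i :: L) g (Function.update ω j a)) (ω i) := by
      intro ω hω
      have h1 := hasDerivAt_iterPDeriv hg (update_mem_openCube hω j hb)
      have h2 := hasDerivAt_iterPDeriv hg (update_mem_openCube hω j ha)
      rw [Function.update_of_ne hij] at h1 h2
      refine (h1.sub h2).congr_of_eventuallyEq ?_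
      filter_upwards [isOpen_Ioo.mem_nhds (hω i trivial)] with s hs
      rw [ih2 _ (update_mem_openCube hω i hs), Function.update_comm hij,
        Function.update_comm hij]
      rfl
    exact ⟨⟨ih1, fun ω hω => (key ω hω).differentiableAt⟩, fun ω hω => (key ω hω).deriv⟩

/-- Mean value inequality for mixed differences. The bound on the mixed derivative is only
needed where the coordinates in `L` lie between the corners. -/
lemma abs_boxDiff_le_of_iterPDeriv {n : ℕ} (p q : Fin n → ℝ) (hp : p ∈ openCube n)
    (hq : q ∈ openCube n) (L : List (Fin n)) (hL : L.Nodup) (hpq : ∀ j ∈ L, p j ≤ q j)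
    (g : (Fin n → ℝ) → ℝ) (M : ℝ)
    (hg : IterDiffOn (openCube n) L g)
    (hM : ∀ ω ∈ openCube n, (∀ j ∈ L, ω j ∈ Set.Icc (p j) (q j)) → |iterPDeriv L g ω| ≤ M) :
    |boxDiff L.toFinset p q g| ≤ M * ∏ j ∈ L.toFinset, (q j - p j) := by
  induction L generalizing g M with
  | nil => simpa [boxDiff_empty, iterPDeriv] using hM p hp (by simp)
  | cons j L ih =>
    obtain ⟨hjL, hL'⟩ := List.nodup_cons.1 hL
    have hjF : j ∉ L.toFinset := by simpa using hjL
    obtain ⟨h1, h2⟩ := iterPDeriv_sub (hp j trivial) (hq j trivial) g L hjL hg.1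
    rw [List.toFinset_cons, boxDiff_insert' hjF, Finset.prod_insert hjF, ← mul_assoc]
    refine ih hL' (fun i hi => hpq i (by simp [hi])) _ _ h1 fun ω hω hωL => ?_
    rw [h2 ω hω]
    have hsub : ∀ s ∈ Set.Icc (p j) (q j), s ∈ Set.Ioo (0 : ℝ) 1 := fun s hs =>
      ⟨(hp j trivial).1.trans_le hs.1, hs.2.trans_lt (hq j trivial).2⟩
    have hder : ∀ s ∈ Set.Icc (p j) (q j),
        HasDerivWithinAt (fun s => iterPDeriv L g (Function.update ω j s))
          (iterPDeriv (j :: L) g (Function.update ω j s)) (Set.Icc (p j) (q j)) s := by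
      intro s hs
      have := hasDerivAt_iterPDeriv hg (update_mem_openCube hω j (hsub s hs))
      simp only [Function.update_idem, Function.update_self] at this
      exact this.hasDerivWithinAt
    have hbd : ∀ s ∈ Set.Icc (p j) (q j),
        ‖iterPDeriv (j :: L) g (Function.update ω j s)‖ ≤ M := by
      intro s hs
      refine hM _ (update_mem_openCube hω j (hsub s hs)) fun i hi => ?_
      by_cases h : i = j
      · subst h; simpa using hs
      · rw [Function.update_of_ne h]
        exact hωL i (by simpa [h] using hi)
    have hj := hpq j (by simp)
    have := (convex_Icc (p j) (q j)).norm_image_sub_le_of_norm_hasDerivWithin_le hder hbd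
      (Set.left_mem_Icc.2 hj) (Set.right_mem_Icc.2 hj)
    rwa [Real.norm_eq_abs, Real.norm_eq_abs, abs_of_nonneg (sub_nonneg.2 hj)] at this

/-- Differencing in the extra coordinates `B` costs at most a factor `2` for each of them, by
the triangle inequality. -/
lemma abs_boxDiff_union_le {n : ℕ} (q : Fin n → ℝ) (hq : q ∈ openCube n)
    (f : (Fin n → ℝ) → ℝ) (I : Finset (Fin n)) (K : ℝ) (p₀ : Fin n → ℝ)
    (hK : ∀ p ∈ openCube n, (∀ j ∈ I, p j = p₀ j) → |boxDiff I p q f| ≤ K)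
    (B : Finset (Fin n)) (hB : Disjoint B I) (p : Fin n → ℝ) (hp : p ∈ openCube n)
    (hpI : ∀ j ∈ I, p j = p₀ j) :
    |boxDiff (B ∪ I) p q f| ≤ 2 ^ B.card * K := by
  induction B using Finset.induction_on generalizing p with
  | empty => simpa using hK p hp hpI
  | insert j B hjB ih =>
    rw [Finset.disjoint_insert_left] at hB
    have hj : j ∉ B ∪ I := by simp [hjB, hB.1]
    rw [Finset.insert_union, boxDiff_insert hj, Finset.card_insert_of_notMem hjB, pow_succ]
    have h1 := ih hB.2 p hp hpI
    have h2 := ih hB.2 (Function.update p j (q j)) (update_mem_openCube hp j (hq j trivial))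
      fun i hi => by
        rw [Function.update_of_ne (ne_of_mem_of_not_mem hi hB.1)]; exact hpI i hi
    have h3 := abs_sub (boxDiff (B ∪ I) (Function.update p j (q j)) q f) (boxDiff (B ∪ I) p q f)
    linarith

/-! ### Square-summable weights of dyadic intervals -/

/-- The weight `2 / min (k + 1) (N - k)` bounding the contribution of one coordinate whose
dyadic interval is the `k`-th of `N`: twice the reciprocal of one plus the distance of the
interval to the boundary of `[0,1]`, measured in interval lengths. -/
noncomputable def blockWeight (N k : ℕ) : ℝ := 2 / min ((k : ℝ) + 1) ((N : ℝ) - k)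

lemma sum_inv_sq_le (N : ℕ) : ∑ k ∈ Finset.range N, (1 : ℝ) / ((k : ℝ) + 1) ^ 2 ≤ 2 := by
  have h : ∀ N : ℕ, ∑ k ∈ Finset.range (N + 1), (1 : ℝ) / ((k : ℝ) + 1) ^ 2
      ≤ 2 - 1 / ((N : ℝ) + 1) := by
    intro N
    induction N with
    | zero => norm_num
    | succ N ih =>
      rw [Finset.sum_range_succ]
      have : (1 : ℝ) / (((N + 1 : ℕ) : ℝ) + 1) ^ 2
          ≤ 1 / ((N : ℝ) + 1) - 1 / (((N + 1 : ℕ) : ℝ) + 1) := by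
        push_cast
        rw [div_sub_div _ _ (by positivity) (by positivity),
          div_le_div_iff₀ (by positivity) (by positivity)]
        have : (0 : ℝ) ≤ N := by positivity
        nlinarith [mul_nonneg this this]
      linarith
  have h0 : (0 : ℝ) ≤ 1 / ((N : ℝ) + 1) := by positivity
  have h1 := h N
  rw [Finset.sum_range_succ] at h1
  have h2 : (0 : ℝ) ≤ 1 / ((N : ℝ) + 1) ^ 2 := by positivity
  linarith

lemma blockWeight_sq_le {N k : ℕ} (hk : k < N) : blockWeight N k ^ 2
    ≤ 4 * (1 / ((k : ℝ) + 1) ^ 2) + 4 * (1 / (((N - 1 - k : ℕ) : ℝ) + 1) ^ 2) := by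
  have e : ((N - 1 - k : ℕ) : ℝ) + 1 = (N : ℝ) - k := by
    have : N - 1 - k + 1 + k = N := by omega
    have := congrArg (Nat.cast : ℕ → ℝ) this
    push_cast at this
    linarith
  have h1 : (0 : ℝ) ≤ 4 * (1 / ((k : ℝ) + 1) ^ 2) := by positivity
  have h2 : (0 : ℝ) ≤ 4 * (1 / ((N : ℝ) - k) ^ 2) := by positivity
  rw [e]
  unfold blockWeight
  rcases min_choice ((k : ℝ) + 1) ((N : ℝ) - k) with h | h <;> rw [h, div_pow]
  · rw [show (2 : ℝ) ^ 2 / ((k : ℝ) + 1) ^ 2 = 4 * (1 / ((k : ℝ) + 1) ^ 2) by ring]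
    linarith
  · rw [show (2 : ℝ) ^ 2 / ((N : ℝ) - k) ^ 2 = 4 * (1 / ((N : ℝ) - k) ^ 2) by ring]
    linarith

/-- The weights are square summable uniformly in the number of intervals. -/
lemma sum_blockWeight_sq_le (N : ℕ) : ∑ k : Fin N, blockWeight N k ^ 2 ≤ 16 := by
  rw [Fin.sum_univ_eq_sum_range (fun k => blockWeight N k ^ 2)]
  refine (Finset.sum_le_sum fun k hk => blockWeight_sq_le (Finset.mem_range.1 hk)).trans ?_
  rw [Finset.sum_add_distrib, ← Finset.mul_sum, ← Finset.mul_sum,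
    Finset.sum_range_reflect (fun k => (1 : ℝ) / ((k : ℝ) + 1) ^ 2)]
  linarith [sum_inv_sq_le N]

lemma blockWeight_nonneg {N k : ℕ} (hk : k < N) : 0 ≤ blockWeight N k := by
  have : (k : ℝ) + 1 ≤ N := by exact_mod_cast hk
  exact div_nonneg (by norm_num) (le_min (by positivity) (by linarith))

/-- In an interval touching neither endpoint of `[0,1]`, the weight dominates the side length `h` times
the growth bound `1 / min t (1 - t)` of the derivative. -/
lemma mul_inv_le_blockWeight {N k : ℕ} {h t : ℝ} (hk0 : 1 ≤ k) (hkN : k + 2 ≤ N)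
    (hN : h * (2 * N) = 1) (ht1 : 2 * k * h ≤ t) (ht2 : t ≤ (2 * k + 2) * h) :
    h * (min t (1 - t))⁻¹ ≤ blockWeight N k := by
  have hk0' : (1 : ℝ) ≤ k := by exact_mod_cast hk0
  have hkN' : (k : ℝ) + 2 ≤ N := by exact_mod_cast hkN
  have hpos : 0 < h := by
    by_contra hc
    push Not at hc
    nlinarith
  have hm : 0 < min ((k : ℝ) + 1) ((N : ℝ) - k) := lt_min (by linarith) (by linarith)
  have hle : h * min ((k : ℝ) + 1) ((N : ℝ) - k) ≤ 2 * min t (1 - t) := by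
    have a1 := min_le_left ((k : ℝ) + 1) ((N : ℝ) - k)
    have a2 := min_le_right ((k : ℝ) + 1) ((N : ℝ) - k)
    rcases min_choice t (1 - t) with e | e <;> rw [e]
    · nlinarith [mul_le_mul_of_nonneg_left a1 hpos.le]
    · nlinarith [mul_le_mul_of_nonneg_left a2 hpos.le]
  have ht : 0 < min t (1 - t) := by nlinarith [mul_pos hpos hm]
  unfold blockWeight
  rw [← div_eq_mul_inv, div_le_div_iff₀ ht hm]
  exact hle

/-- In an interval touching an endpoint of `[0,1]` the weight is exactly `2`. -/
lemma blockWeight_boundary {N k : ℕ} (hk : k < N) (h : ¬ (1 ≤ k ∧ k + 2 ≤ N)) :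
    blockWeight N k = 2 := by
  have h1 : (k : ℝ) + 1 ≤ N := by exact_mod_cast hk
  have h0 : (0 : ℝ) ≤ k := by positivity
  unfold blockWeight
  rcases (by omega : k = 0 ∨ k + 1 = N) with e | e
  · subst e
    rw [min_eq_left (by push_cast at *; linarith)]; norm_num
  · have e' : (k : ℝ) + 1 = N := by exact_mod_cast e
    rw [min_eq_right (by linarith), ← e']; norm_num

/-! ### Bounds on a dyadic block -/

/-- Pointwise bound on the mixed difference at a point of a dyadic block: the product of the
weights. The mean value inequality is used in the coordinates whose doubled block (the block and
its right neighbour) stays away from the boundary, the triangle inequality in the others. -/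
lemma abs_boxDiff_block_le {n : ℕ} {C : ℝ} (hC : 0 < C) {f : (Fin n → ℝ) → ℝ}
    (hdiff : ∀ u : Finset (Fin n), IterDiffOn (openCube n) (u.sort (· ≤ ·)) f)
    (hbound : ∀ u : Finset (Fin n), ∀ ω ∈ openCube n,
      |iterPDeriv (u.sort (· ≤ ·)) f ω| ≤ C * ∏ j ∈ u, (min (ω j) (1 - ω j))⁻¹)
    (u : Finset (Fin n)) (h : Fin n → ℝ) (N k : Fin n → ℕ) (hkN : ∀ j, k j < N j)
    (hN : ∀ j ∈ u, h j * (2 * N j) = 1) (huc : ∀ j, 1 ≤ blockWeight (N j) (k j) ∨ j ∈ u)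
    (y q : Fin n → ℝ) (hy : y ∈ openCube n) (hq : q ∈ openCube n)
    (hqy : ∀ j ∈ u, q j = y j + h j)
    (hyk : ∀ j ∈ u, 2 * k j * h j ≤ y j ∧ y j ≤ (2 * k j + 1) * h j) :
    |boxDiff u y q f| ≤ C * ∏ j, blockWeight (N j) (k j) := by
  classical
  have hhpos : ∀ j ∈ u, 0 < h j := fun j hj => by
    have h1 := hN j hj
    have h2 : (0 : ℝ) ≤ N j := by positivity
    by_contra hc
    push Not at hc
    nlinarith
  set I := u.filter fun j => 1 ≤ k j ∧ k j + 2 ≤ N j with hI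
  set B := u.filter fun j => ¬ (1 ≤ k j ∧ k j + 2 ≤ N j) with hB
  have hBI : B ∪ I = u := by rw [Finset.union_comm]; exact Finset.filter_union_filter_not_eq _ _
  have hdisj : Disjoint B I := (Finset.disjoint_filter_filter_not _ _ _).symm
  have hIu : ∀ j ∈ I, j ∈ u := fun j hj => (Finset.mem_filter.1 hj).1
  have hmain : ∀ p ∈ openCube n, (∀ j ∈ I, p j = y j) →
      |boxDiff I p q f| ≤ C * ∏ j ∈ I, blockWeight (N j) (k j) := by
    intro p hp hpy
    have hdp : ∀ j ∈ I, q j - p j = h j := fun j hj => by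
      rw [hpy j hj, hqy j (hIu j hj)]; ring
    have := abs_boxDiff_le_of_iterPDeriv p q hp hq (I.sort (· ≤ ·)) (I.sort_nodup _)
      (fun j hj => by
        have hj := (Finset.mem_sort _).1 hj
        linarith [hdp j hj, hhpos j (hIu j hj)])
      f (C * ∏ j ∈ I, (blockWeight (N j) (k j) / h j)) (hdiff I)
      (fun ω hω hωI => by
        refine (hbound I ω hω).trans ?_
        refine mul_le_mul_of_nonneg_left (Finset.prod_le_prod (fun j _ => ?_) fun j hj => ?_) hC.le
        · exact inv_nonneg.2 (le_min (hω j trivial).1.le (sub_nonneg.2 (hω j trivial).2.le))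
        · obtain ⟨hju, h1, h2⟩ := Finset.mem_filter.1 hj
          have hωj := hωI j ((Finset.mem_sort _).2 hj)
          have hd := hdp j hj
          rw [hpy j hj] at hd hωj
          have := hyk j hju
          rw [le_div_iff₀ (hhpos j hju), mul_comm]
          exact mul_inv_le_blockWeight h1 h2 (hN j hju) (this.1.trans hωj.1)
            (by linarith [hωj.2, this.2]))
    rw [Finset.sort_toFinset, mul_assoc, ← Finset.prod_mul_distrib] at this
    refine this.trans_eq ?_
    congr 1
    refine Finset.prod_congr rfl fun j hj => ?_
    rw [hdp j hj, div_mul_cancel₀ _ (hhpos j (hIu j hj)).ne']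
  have h1 := abs_boxDiff_union_le q hq f I _ y hmain B hdisj y hy fun _ _ => rfl
  rw [hBI] at h1
  refine h1.trans ?_
  have h2 : (2 : ℝ) ^ B.card = ∏ j ∈ B, blockWeight (N j) (k j) := by
    rw [Finset.prod_congr rfl fun j hj =>
      blockWeight_boundary (hkN j) (Finset.mem_filter.1 hj).2, Finset.prod_const]
  rw [h2, mul_left_comm, ← Finset.prod_union hdisj, hBI]
  refine mul_le_mul_of_nonneg_left ?_ hC.le
  rw [← Finset.prod_mul_prod_compl u]
  refine le_mul_of_one_le_right (Finset.prod_nonneg fun j _ => blockWeight_nonneg (hkN j)) ?_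
  refine (Finset.prod_const_one (s := uᶜ)).symm.le.trans
    (Finset.prod_le_prod (fun _ _ => zero_le_one) fun j hj => ?_)
  exact (huc j).resolve_right (Finset.mem_compl.1 hj)

/-- The dyadic block agrees, up to a null set, with an open box; the exceptional boundary is
where `f` or its derivatives may be uncontrolled. -/
lemma block_ae_eq {n : ℕ} (ℓ k : Fin n → ℕ) (hk : ∀ j, k j < 2 ^ (ℓ j - 1)) :
    {y : Fin n → ℝ |
        (∀ j ∈ Finset.univ.filter fun j : Fin n => 1 ≤ ℓ j,
          ⌊y j * (2 : ℝ) ^ (ℓ j)⌋ = 2 * ((k j : ℕ) : ℤ)) ∧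
        (∀ j ∉ Finset.univ.filter fun j : Fin n => 1 ≤ ℓ j, y j ∈ Set.Icc (0 : ℝ) 1)}
      =ᵐ[volume] Set.univ.pi fun j => Set.Ioo (2 * (k j : ℝ) * ((2 : ℝ) ^ ℓ j)⁻¹)
        ((2 * (k j : ℝ) + 1) * ((2 : ℝ) ^ ℓ j)⁻¹) := by
  have hpos : ∀ j, (0 : ℝ) < 2 ^ ℓ j := fun j => by positivity
  have hzero : ∀ j, ¬ 1 ≤ ℓ j → (k j = 0 ∧ ℓ j = 0) := fun j hj => by
    have h0 : ℓ j = 0 := by omega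
    have := hk j
    simp [h0] at this
    exact ⟨this, h0⟩
  have hsub1 : (Set.univ.pi fun j => Set.Ioo (2 * (k j : ℝ) * ((2 : ℝ) ^ ℓ j)⁻¹)
        ((2 * (k j : ℝ) + 1) * ((2 : ℝ) ^ ℓ j)⁻¹)) ⊆ {y : Fin n → ℝ |
        (∀ j ∈ Finset.univ.filter fun j : Fin n => 1 ≤ ℓ j,
          ⌊y j * (2 : ℝ) ^ (ℓ j)⌋ = 2 * ((k j : ℕ) : ℤ)) ∧
        (∀ j ∉ Finset.univ.filter fun j : Fin n => 1 ≤ ℓ j, y j ∈ Set.Icc (0 : ℝ) 1)} := by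
    intro y hy
    refine ⟨fun j _ => ?_, fun j hj => ?_⟩
    · have := hy j trivial
      rw [Set.mem_Ioo, ← div_eq_mul_inv, ← div_eq_mul_inv, div_lt_iff₀ (hpos j),
        lt_div_iff₀ (hpos j)] at this
      rw [Int.floor_eq_iff]
      push_cast
      exact ⟨this.1.le, this.2⟩
    · obtain ⟨h1, h2⟩ := hzero j (by simpa using hj)
      have := hy j trivial
      simp [h1, h2] at this
      exact ⟨this.1.le, this.2.le⟩
  have hsub2 : {y : Fin n → ℝ |
        (∀ j ∈ Finset.univ.filter fun j : Fin n => 1 ≤ ℓ j,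
          ⌊y j * (2 : ℝ) ^ (ℓ j)⌋ = 2 * ((k j : ℕ) : ℤ)) ∧
        (∀ j ∉ Finset.univ.filter fun j : Fin n => 1 ≤ ℓ j, y j ∈ Set.Icc (0 : ℝ) 1)} ⊆
      Set.univ.pi fun j => Set.Icc (2 * (k j : ℝ) * ((2 : ℝ) ^ ℓ j)⁻¹)
        ((2 * (k j : ℝ) + 1) * ((2 : ℝ) ^ ℓ j)⁻¹) := by
    rintro y ⟨hy1, hy2⟩ j -
    by_cases hj : 1 ≤ ℓ j
    · have := Int.floor_eq_iff.1 (hy1 j (by simpa using hj))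
      push_cast at this
      rw [Set.mem_Icc, ← div_eq_mul_inv, ← div_eq_mul_inv, div_le_iff₀ (hpos j),
        le_div_iff₀ (hpos j)]
      exact ⟨this.1, this.2.le⟩
    · obtain ⟨h1, h2⟩ := hzero j hj
      simpa [h1, h2] using hy2 j (by simpa using hj)
  have hae := Measure.pi_Ioo_ae_eq_pi_Icc (μ := fun _ : Fin n => (volume : Measure ℝ))
    (s := Set.univ) (f := fun j => 2 * (k j : ℝ) * ((2 : ℝ) ^ ℓ j)⁻¹)
    (g := fun j => (2 * (k j : ℝ) + 1) * ((2 : ℝ) ^ ℓ j)⁻¹)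
  exact Filter.EventuallyLE.antisymm
    ((LE.le.eventuallyLE hsub2).trans hae.symm.le)
    (LE.le.eventuallyLE hsub1)

/-! ### The energy estimate -/

/-- Multidimensional decay estimate for the dyadic Walsh energies of an
integrand on `[0,1]^{d+1}` satisfying the boundary growth condition with all exponents
`A_j = 0`: with `u = {j : l_j ≥ 1}` nonempty,
`2^{(d+1)+‖ℓ‖₁} Σ_{k_u} ( ∫_{[0,1]^{|u^c|}} ∫_{B(k_u)} Σ_{v⊆u} (−1)^{|v|} f(y^{(v)}) dy_u dy_{u^c} )²
  ≤ C² 2^{−‖ℓ‖₁ + 5(d+1)}`. -/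
theorem walsh_energy_decay_multi_dim
    (d : ℕ) (C : ℝ) (hC : 0 < C)
    (f : (Fin (d + 1) → ℝ) → ℝ)
    (hdiff : ∀ u : Finset (Fin (d + 1)),
      IterDiffOn (Set.univ.pi fun _ : Fin (d + 1) => Set.Ioo (0 : ℝ) 1)
        (u.sort (· ≤ ·)) f)
    (hbound : ∀ u : Finset (Fin (d + 1)),
      ∀ ω ∈ Set.univ.pi fun _ : Fin (d + 1) => Set.Ioo (0 : ℝ) 1,
        |iterPDeriv (u.sort (· ≤ ·)) f ω|
          ≤ C * ∏ j ∈ u, (min (ω j) (1 - ω j))⁻¹)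
    (ℓ : Fin (d + 1) → ℕ)
    (hu : (Finset.univ.filter fun j : Fin (d + 1) => 1 ≤ ℓ j).Nonempty) :
    (2 : ℝ) ^ (d + 1 + ∑ j, ℓ j) *
        ∑ k : (j : Fin (d + 1)) → Fin (2 ^ (ℓ j - 1)),
          (∫ y in {y : Fin (d + 1) → ℝ |
              (∀ j ∈ Finset.univ.filter fun j : Fin (d + 1) => 1 ≤ ℓ j,
                ⌊y j * (2 : ℝ) ^ (ℓ j)⌋ = 2 * ((k j : ℕ) : ℤ)) ∧
              (∀ j ∉ Finset.univ.filter fun j : Fin (d + 1) => 1 ≤ ℓ j,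
                y j ∈ Set.Icc (0 : ℝ) 1)},
            ∑ v ∈ (Finset.univ.filter fun j : Fin (d + 1) => 1 ≤ ℓ j).powerset,
              (-1 : ℝ) ^ v.card *
                f (fun j =>
                  if j ∈ (Finset.univ.filter fun j : Fin (d + 1) => 1 ≤ ℓ j) \ v
                  then y j + ((2 : ℝ) ^ (ℓ j))⁻¹ else y j)) ^ 2
      ≤ C ^ 2 * (2 : ℝ) ^ (5 * (d + 1)) / (2 : ℝ) ^ (∑ j, ℓ j) := by
  classical
  set u := Finset.univ.filter fun j : Fin (d + 1) => 1 ≤ ℓ j with hudef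
  set H : ℝ := ((2 : ℝ) ^ (∑ j, ℓ j))⁻¹ with hH
  have hint : ∀ k : (j : Fin (d + 1)) → Fin (2 ^ (ℓ j - 1)),
      (∫ y in {y : Fin (d + 1) → ℝ |
              (∀ j ∈ u, ⌊y j * (2 : ℝ) ^ (ℓ j)⌋ = 2 * ((k j : ℕ) : ℤ)) ∧
              (∀ j ∉ u, y j ∈ Set.Icc (0 : ℝ) 1)},
            ∑ v ∈ u.powerset, (-1 : ℝ) ^ v.card *
                f (fun j => if j ∈ u \ v
                  then y j + ((2 : ℝ) ^ (ℓ j))⁻¹ else y j)) ^ 2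
        ≤ C ^ 2 * H ^ 2 * ∏ j, blockWeight (2 ^ (ℓ j - 1)) (k j) ^ 2 := by
    intro k
    have hkN : ∀ j, (k j : ℕ) < 2 ^ (ℓ j - 1) := fun j => (k j).2
    have hvol : volume (Set.univ.pi fun j : Fin (d + 1) =>
        Set.Ioo (2 * ((k j : ℕ) : ℝ) * ((2 : ℝ) ^ ℓ j)⁻¹)
        ((2 * ((k j : ℕ) : ℝ) + 1) * ((2 : ℝ) ^ ℓ j)⁻¹)) = ENNReal.ofReal H := by
      rw [Real.volume_pi_Ioo, hH, ← Finset.prod_pow_eq_pow_sum, ← Finset.prod_inv_distrib,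
        ENNReal.ofReal_prod_of_nonneg (fun j _ => by positivity)]
      refine Finset.prod_congr rfl fun j _ => ?_
      congr 1
      ring
    rw [setIntegral_congr_set (block_ae_eq ℓ (fun j => (k j : ℕ)) hkN)]
    have hH0 : 0 ≤ H := by positivity
    have hnorm := norm_setIntegral_le_of_norm_le_const (μ := volume)
      (s := Set.univ.pi fun j : Fin (d + 1) =>
        Set.Ioo (2 * ((k j : ℕ) : ℝ) * ((2 : ℝ) ^ ℓ j)⁻¹)
        ((2 * ((k j : ℕ) : ℝ) + 1) * ((2 : ℝ) ^ ℓ j)⁻¹))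
      (f := fun y => ∑ v ∈ u.powerset, (-1 : ℝ) ^ v.card *
                f (fun j => if j ∈ u \ v
                  then y j + ((2 : ℝ) ^ (ℓ j))⁻¹ else y j))
      (C := C * ∏ j, blockWeight (2 ^ (ℓ j - 1)) (k j)) (by rw [hvol]; exact ENNReal.ofReal_lt_top)
      (fun y hy => by
        have hN : ∀ j ∈ u, ((2 : ℝ) ^ ℓ j)⁻¹ * (2 * ((2 ^ (ℓ j - 1) : ℕ) : ℝ)) = 1 := by
          intro j hj
          have hj : 1 ≤ ℓ j := by simpa [hudef] using hj
          obtain ⟨m, hm⟩ := Nat.exists_eq_add_of_le hj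
          rw [hm]
          have : 1 + m - 1 = m := by omega
          rw [this]
          push_cast
          rw [pow_add, pow_one]
          field_simp
        have hz : ∀ j ∉ u, ℓ j = 0 ∧ (k j : ℕ) = 0 := by
          intro j hj
          have h0 : ℓ j = 0 := by simpa [hudef] using hj
          have := hkN j
          simp only [h0] at this
          exact ⟨h0, by simpa using this⟩
        -- Both `y` and its shift lie in the open cube: the block and its right neighbour fit.
        have hcube : ∀ j, 0 < y j ∧ (j ∈ u → y j + ((2 : ℝ) ^ ℓ j)⁻¹ < 1) ∧ y j < 1 := by
          intro j
          obtain ⟨h1, h2⟩ := hy j trivial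
          have hp : (0 : ℝ) < ((2 : ℝ) ^ ℓ j)⁻¹ := by positivity
          have h0 : 0 < y j := lt_of_le_of_lt (by positivity) h1
          by_cases hj : j ∈ u
          · have hle : ((k j : ℕ) : ℝ) + 1 ≤ ((2 ^ (ℓ j - 1) : ℕ) : ℝ) := by
              exact_mod_cast hkN j
            have := hN j hj
            have h3 : y j + ((2 : ℝ) ^ ℓ j)⁻¹ < 1 := by
              nlinarith [mul_le_mul_of_nonneg_left hle hp.le]
            exact ⟨h0, fun _ => h3, by linarith⟩
          · obtain ⟨e1, e2⟩ := hz j hj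
            rw [e2, e1] at h2
            norm_num at h2
            exact ⟨h0, fun h => absurd h hj, h2⟩
        have key := abs_boxDiff_block_le hC hdiff hbound u (fun j => ((2 : ℝ) ^ ℓ j)⁻¹)
          (fun j => 2 ^ (ℓ j - 1)) (fun j => (k j : ℕ)) hkN hN
          (fun j => by
            by_cases hj : j ∈ u
            · exact Or.inr hj
            · refine Or.inl ?_
              obtain ⟨e1, e2⟩ := hz j hj
              simp only [e1, e2]
              rw [blockWeight_boundary (by norm_num) (by norm_num)]
              norm_num)
          y (fun j => if j ∈ u then y j + ((2 : ℝ) ^ ℓ j)⁻¹ else y j)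
          (fun j _ => ⟨(hcube j).1, (hcube j).2.2⟩)
          (fun j _ => by
            by_cases hj : j ∈ u
            · simp only [hj, if_true]
              exact ⟨add_pos (hcube j).1 (by positivity), (hcube j).2.1 hj⟩
            · simp only [hj, if_false]
              exact ⟨(hcube j).1, (hcube j).2.2⟩)
          (fun j hj => by simp [hj])
          (fun j _ => ⟨(hy j trivial).1.le, (hy j trivial).2.le⟩)
        rw [Real.norm_eq_abs]
        refine le_trans (le_of_eq ?_) key
        unfold boxDiff
        congr 1
        refine Finset.sum_congr rfl fun v _ => ?_
        congr 2
        funext j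
        by_cases hj : j ∈ u <;> simp [hj])
    rw [measureReal_def, hvol, ENNReal.toReal_ofReal hH0, Real.norm_eq_abs] at hnorm
    rw [← sq_abs]
    refine (pow_le_pow_left₀ (abs_nonneg _) hnorm 2).trans_eq ?_
    rw [Finset.prod_pow]
    ring
  have hsum : ∑ k : (j : Fin (d + 1)) → Fin (2 ^ (ℓ j - 1)),
      ∏ j, blockWeight (2 ^ (ℓ j - 1)) (k j) ^ 2 ≤ 16 ^ (d + 1) := by
    rw [← Fintype.piFinset_univ, ← Finset.prod_univ_sum (fun _ => Finset.univ)
      (fun j (i : Fin (2 ^ (ℓ j - 1))) => blockWeight (2 ^ (ℓ j - 1)) i ^ 2)]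
    refine (Finset.prod_le_prod (fun j _ => Finset.sum_nonneg fun _ _ => sq_nonneg _)
      fun j _ => sum_blockWeight_sq_le _).trans_eq ?_
    simp
  have htot := (Finset.sum_le_sum fun k (_ : k ∈ Finset.univ) => hint k).trans_eq
    (Finset.mul_sum _ _ _).symm
  have htot2 := htot.trans (mul_le_mul_of_nonneg_left hsum (by positivity))
  refine (mul_le_mul_of_nonneg_left htot2 (by positivity)).trans_eq ?_
  have e16 : (2 : ℝ) ^ (5 * (d + 1)) = 2 ^ (d + 1) * 16 ^ (d + 1) := by
    rw [← mul_pow, pow_mul]; norm_num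
  rw [hH, e16, pow_add]
  field_simp
end
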